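/- arXiv:1708.00832 — 3 statements merged into one kernel-verified Lean document; each statement's English description precedes it below -/
import Mathlib

section
/- Let T = {1234, 1423, 2341} (patterns of length 4). Then the generating function for T-avoiders satisfies, as formal power series over ℚ, x^2·(1-x)·(1-2x)·F_T(x) = (1 - 7x + 18x^2 - 19x^3 + 6x^4)·C(x) - (1 - 6x + 12x^2 - 8x^3 + x^4), where C(x) is the Catalan number generating function. -/
open PowerSeries

/-- A permutation `π` of `{0,…,n-1}` contains the pattern `σ` (of length `k`) if there is an
order-embedding of positions on which the values of `π` appear in the same relative order as
the values of `σ`. -/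
def ContainsPattern {n k : ℕ} (π : Equiv.Perm (Fin n)) (σ : Fin k → Fin k) : Prop :=
  ∃ f : Fin k ↪o Fin n, ∀ a b : Fin k, σ a < σ b ↔ π (f a) < π (f b)

/-- The number of permutations of length `n` avoiding every pattern in `T`. -/
noncomputable def avoiderCount (T : Set (Fin 4 → Fin 4)) (n : ℕ) : ℕ :=
  Nat.card {π : Equiv.Perm (Fin n) // ∀ σ ∈ T, ¬ ContainsPattern π σ}

/-- The generating function `F_T(x) = ∑_n |S_n(T)| xⁿ` over `ℚ`. -/
noncomputable def avoiderGF (T : Set (Fin 4 → Fin 4)) : PowerSeries ℚ :=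
  PowerSeries.mk fun n => (avoiderCount T n : ℚ)

/-- The generating function of the Catalan numbers over `ℚ`. -/
noncomputable def catalanGF : PowerSeries ℚ :=
  PowerSeries.mk fun n => (catalan n : ℚ)


namespace T15

/-- Insert `v` as new first value. `q` maps values to positions. -/
def ins (v : ℕ) (q : ℕ → ℕ) (a : ℕ) : ℕ :=
  if a = v then 0 else if a < v then q a + 1 else q (a - 1) + 1

def sh (v a : ℕ) : ℕ := if a < v then a else a + 1

theorem ins_self (v : ℕ) (q : ℕ → ℕ) : ins v q v = 0 := by simp [ins]
theorem ins_lt {v a : ℕ} (q : ℕ → ℕ) (h : a < v) : ins v q a = q a + 1 := by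
  simp [ins, h, h.ne]
theorem ins_gt {v a : ℕ} (q : ℕ → ℕ) (h : v ≤ a) : ins v q (a + 1) = q a + 1 := by
  have h1 : a + 1 ≠ v := by omega
  have h2 : ¬ (a + 1 < v) := by omega
  simp [ins, h1, h2]
theorem ins_sh (v a : ℕ) (q : ℕ → ℕ) : ins v q (sh v a) = q a + 1 := by
  unfold sh
  split_ifs with h
  · exact ins_lt q h
  · exact ins_gt q (by omega)
theorem sh_cases (v a : ℕ) : v = a ∨ ∃ b, a = sh v b := by
  rcases lt_trichotomy a v with h | h | h
  · exact Or.inr ⟨a, by simp [sh, h]⟩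
  · exact Or.inl h.symm
  · refine Or.inr ⟨a - 1, ?_⟩
    unfold sh
    split_ifs <;> omega
theorem sh_lt {v a b : ℕ} : sh v a < sh v b ↔ a < b := by
  unfold sh; split_ifs <;> omega
theorem sh_lt_v {v a : ℕ} : sh v a < v ↔ a < v := by
  unfold sh; split_ifs <;> omega
theorem v_lt_sh {v a : ℕ} : v < sh v a ↔ v ≤ a := by
  unfold sh; split_ifs <;> omega
theorem sh_lt_n {v a n : ℕ} (h : v ≤ n) : sh v a < n + 1 ↔ a < n := by
  unfold sh; split_ifs <;> omega

def Av (n : ℕ) (q : ℕ → ℕ) : Prop :=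
  ∀ a b c d, a < b → b < c → c < d → d < n →
    ¬ (q a < q b ∧ q b < q c ∧ q c < q d) ∧
    ¬ (q a < q d ∧ q d < q b ∧ q b < q c) ∧
    ¬ (q b < q c ∧ q c < q d ∧ q d < q a)

def Act (n : ℕ) (q : ℕ → ℕ) (v : ℕ) : Prop :=
  ∀ a b c, a < b → b < c → c < n →
    (v ≤ a → ¬ (q a < q b ∧ q b < q c)) ∧
    (v ≤ a → ¬ (q c < q a ∧ q a < q b)) ∧
    (a < v → v ≤ b → ¬ (q b < q c ∧ q c < q a))

theorem av_ins {n v : ℕ} {q : ℕ → ℕ} (hv : v ≤ n) :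
    Av (n + 1) (ins v q) ↔ Av n q ∧ Act n q v := by
  constructor
  · intro h
    refine ⟨?_, ?_⟩
    · intro a b c d h1 h2 h3 h4
      have := h (sh v a) (sh v b) (sh v c) (sh v d) (sh_lt.2 h1) (sh_lt.2 h2) (sh_lt.2 h3)
        ((sh_lt_n hv).2 h4)
      simp only [ins_sh] at this
      omega
    · intro a b c h1 h2 h3
      refine ⟨fun hh => ?_, fun hh => ?_, fun hh hh' => ?_⟩
      · have := h v (sh v a) (sh v b) (sh v c) (v_lt_sh.2 hh) (sh_lt.2 h1) (sh_lt.2 h2)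
          ((sh_lt_n hv).2 h3)
        simp only [ins_sh, ins_self] at this
        omega
      · have := h v (sh v a) (sh v b) (sh v c) (v_lt_sh.2 hh) (sh_lt.2 h1) (sh_lt.2 h2)
          ((sh_lt_n hv).2 h3)
        simp only [ins_sh, ins_self] at this
        omega
      · have := h (sh v a) v (sh v b) (sh v c) (sh_lt_v.2 hh) (v_lt_sh.2 hh') (sh_lt.2 h2)
          ((sh_lt_n hv).2 h3)
        simp only [ins_sh, ins_self] at this
        omega
  · rintro ⟨h, h'⟩ a b c d h1 h2 h3 h4
    rcases sh_cases v a with rfl | ⟨a, rfl⟩ <;> rcases sh_cases v b with rfl | ⟨b, rfl⟩ <;>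
    rcases sh_cases v c with rfl | ⟨c, rfl⟩ <;> rcases sh_cases v d with rfl | ⟨d, rfl⟩ <;>
    simp only [ins_sh, ins_self, sh_lt, sh_lt_v, v_lt_sh, sh_lt_n hv] at h1 h2 h3 h4 ⊢ <;>
    first
    | omega
    | (have := h a b c d h1 h2 h3 h4; omega)
    | (have := h' b c d h2 h3 h4; omega)
    | (have := h' a c d (by omega) h3 h4; omega)

theorem act_ins_gt {n v u : ℕ} {q : ℕ → ℕ} (hv : v ≤ n) (hu : v ≤ u) :
    Act (n + 1) (ins v q) (u + 1) ↔ Act n q u := by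
  have key : ∀ a, u + 1 ≤ sh v a ↔ u ≤ a := by
    intro a; unfold sh; split_ifs <;> omega
  have key2 : ∀ a, sh v a < u + 1 ↔ a < u := by
    intro a; unfold sh; split_ifs <;> omega
  constructor
  · intro h a b c h1 h2 h3
    have := h (sh v a) (sh v b) (sh v c) (sh_lt.2 h1) (sh_lt.2 h2) ((sh_lt_n hv).2 h3)
    simp only [ins_sh, key, key2] at this
    omega
  · intro h a b c h1 h2 h3
    rcases sh_cases v a with rfl | ⟨a, rfl⟩ <;> rcases sh_cases v b with rfl | ⟨b, rfl⟩ <;>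
    rcases sh_cases v c with rfl | ⟨c, rfl⟩ <;>
    simp only [ins_sh, ins_self, sh_lt, sh_lt_v, v_lt_sh, sh_lt_n hv, key, key2] at h1 h2 h3 ⊢ <;>
    first
    | omega
    | (have := h a b c h1 h2 h3; omega)

theorem act_ins_le {n v u : ℕ} {q : ℕ → ℕ} (hv : v ≤ n) (hu : u ≤ v) :
    Act (n + 1) (ins v q) u ↔ Act n q u ∧ (∀ b c, v ≤ b → b < c → c < n → ¬ q b < q c) ∧
      (∀ a b, u ≤ a → a < b → b < v → ¬ q a < q b) ∧
      (∀ a c, a < u → v ≤ c → c < n → ¬ q c < q a) := by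
  have key : ∀ a, u ≤ sh v a ↔ u ≤ a := by
    intro a; unfold sh; split_ifs <;> omega
  have key2 : ∀ a, sh v a < u ↔ a < u := by
    intro a; unfold sh; split_ifs <;> omega
  constructor
  · intro h
    refine ⟨?_, ?_, ?_, ?_⟩
    · intro a b c h1 h2 h3
      have := h (sh v a) (sh v b) (sh v c) (sh_lt.2 h1) (sh_lt.2 h2) ((sh_lt_n hv).2 h3)
      simp only [ins_sh, key, key2] at this
      omega
    · intro b c h1 h2 h3
      have := h v (sh v b) (sh v c) (v_lt_sh.2 h1) (sh_lt.2 h2) ((sh_lt_n hv).2 h3)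
      simp only [ins_sh, ins_self] at this
      omega
    · intro a b h1 h2 h3
      have := h (sh v a) (sh v b) v (sh_lt.2 h2) (sh_lt_v.2 h3) (by omega)
      simp only [ins_sh, ins_self, key] at this
      omega
    · intro a c h1 h2 h3
      have := h (sh v a) v (sh v c) (sh_lt_v.2 (by omega)) (v_lt_sh.2 h2) ((sh_lt_n hv).2 h3)
      simp only [ins_sh, ins_self, key2] at this
      omega
  · rintro ⟨h, hb, hc, hd⟩ a b c h1 h2 h3
    rcases sh_cases v a with rfl | ⟨a, rfl⟩ <;> rcases sh_cases v b with rfl | ⟨b, rfl⟩ <;>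
    rcases sh_cases v c with rfl | ⟨c, rfl⟩ <;>
    simp only [ins_sh, ins_self, sh_lt, sh_lt_v, v_lt_sh, sh_lt_n hv, key, key2] at h1 h2 h3 ⊢ <;>
    first
    | omega
    | (have := h a b c h1 h2 h3; omega)
    | (have := hb b c h1 h2 h3; omega)
    | (have := hc a b; omega)
    | (have := hd a c; omega)

/-- the labels of the generating tree -/
inductive St
  | N (k : ℕ)
  | F (j : ℕ)
  | G (j b : ℕ)
  | D (n : ℕ)

open St

def W : ℕ → St → ℕ
  | 0, _ => 1
  | m + 1, N k => W m (N (k + 1)) + ∑ i ∈ Finset.range (k + 1), W m (N i)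
  | m + 1, F j => W m (N (j + 1)) + ∑ i ∈ Finset.range j, W m (N i) + W m (F j) + W m (F j)
  | m + 1, G j b => W m (N (j + 1)) + ∑ i ∈ Finset.range j, W m (F i) + W m (G j (b + 1)) +
      ∑ i ∈ Finset.range (b + 1), W m (G j i)
  | m + 1, D 0 => W m (D 1)
  | m + 1, D (n + 1) => W m (D (n + 2)) + ∑ i ∈ Finset.range n, W m (F i) + W m (G n 0)

def IsSt (n : ℕ) (q : ℕ → ℕ) : St → Prop
  | N k => ∃ t, n = t + (k + 1) ∧ (∀ a b, t ≤ a → a < b → b < n → q b < q a) ∧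
      (∃ z, z < t ∧ q (n - 1) < q z) ∧ ∀ u, u < t → ¬ Act n q u
  | F j => ∃ t s, n = t + (j + 1) ∧ s < t ∧ (∀ a b, t ≤ a → a < b → b < n → q b < q a) ∧
      (∀ a b, s ≤ a → a < b → b < t → q b < q a) ∧
      (∀ z x, z < s → t ≤ x → x < n → q z < q x) ∧
      (∃ e, s ≤ e ∧ e < t ∧ q e < q (n - 1)) ∧
      (∃ z, s ≤ z ∧ z < t ∧ q (n - 1) < q z) ∧
      Act n q s ∧ ∀ u, u < t → u ≠ s → ¬ Act n q u
  | G j b => ∃ t, n = t + (b + 1) + (j + 1) ∧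
      (∀ x y, t + (b + 1) ≤ x → x < y → y < n → q y < q x) ∧
      (∀ x y, t ≤ x → x < y → y < t + (b + 1) → q y < q x) ∧
      (∀ z x, z < t + (b + 1) → t + (b + 1) ≤ x → x < n → q z < q x) ∧
      ∀ u, u < t → ¬ Act n q u
  | D m => n = m ∧ ∀ a b, a < b → b < n → q b < q a

open Classical in
noncomputable def E : ℕ → ℕ → (ℕ → ℕ) → ℕ
  | 0, _, _ => 1
  | m + 1, n, q => ∑ i ∈ Finset.range (n + 1),
      if Act n q (n - i) then E m (n + 1) (ins (n - i) q) else 0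

theorem act_top {n t u : ℕ} {q : ℕ → ℕ} (hd : ∀ a b, t ≤ a → a < b → b < n → q b < q a)
    (hu : t ≤ u) : Act n q u := by
  intro a b c h1 h2 h3
  have := hd b c
  have := hd a b
  omega

theorem ins_mono {n v t t' : ℕ} {q : ℕ → ℕ} (hd : ∀ a b, t ≤ a → a < b → b < n → q b < q a)
    (hv : v ≤ n) (ht : t' = v + 1 ∧ t ≤ v ∨ v = n ∧ t' = t) :
    ∀ a b, t' ≤ a → a < b → b < n + 1 → ins v q b < ins v q a := by
  intro a b h1 h2 h3
  rcases sh_cases v a with rfl | ⟨a, rfl⟩ <;> rcases sh_cases v b with rfl | ⟨b, rfl⟩ <;>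
  simp only [ins_sh, ins_self, sh_lt, sh_lt_v, v_lt_sh, sh_lt_n hv] at h1 h2 h3 ⊢ <;>
  try omega
  have h4 : t ≤ a := by
    unfold sh at h1; split_ifs at h1 <;> omega
  have := hd a b h4 h2 h3
  omega

theorem toN_top {n t k : ℕ} {q : ℕ → ℕ} (hn : n = t + k) (ht : 0 < t)
    (hd : ∀ a b, t ≤ a → a < b → b < n → q b < q a)
    (hu : ∀ u, u < t → Act n q u → ∃ a b, u ≤ a ∧ a < b ∧ b < n ∧ q a < q b) :
    IsSt (n + 1) (ins n q) (N k) := by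
  refine ⟨t, by omega, ins_mono hd le_rfl (Or.inr ⟨rfl, rfl⟩), ⟨0, ht, ?_⟩, ?_⟩
  · rw [ins_lt q (show 0 < n by omega)]
    simp [ins_self]
  · intro u h hA
    rw [act_ins_le le_rfl (by omega)] at hA
    obtain ⟨a, b, h1, h2, h3, h4⟩ := hu u h hA.1
    exact hA.2.2.1 a b h1 h2 h3 h4

theorem toN_mid {n t v i : ℕ} {q : ℕ → ℕ} (hn : n = v + i + 1) (htv : t ≤ v)
    (hd : ∀ a b, t ≤ a → a < b → b < n → q b < q a) (hz : ∃ z, z < t ∧ q (n - 1) < q z)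
    (hu : ∀ u, u < t → Act n q u → ∃ a b, u ≤ a ∧ a < b ∧ b < v ∧ q a < q b) :
    IsSt (n + 1) (ins v q) (N i) := by
  obtain ⟨z, hz1, hz2⟩ := hz
  refine ⟨v + 1, by omega, ins_mono hd (by omega) (Or.inl ⟨rfl, htv⟩), ⟨z, by omega, ?_⟩, ?_⟩
  · rw [ins_lt q (show z < v by omega)]
    have : n + 1 - 1 = (n - 1) + 1 := by omega
    rw [this, ins_gt q (by omega)]
    omega
  · intro u h hA
    rw [act_ins_le (by omega) (by omega)] at hA
    rcases lt_or_ge u t with h' | h'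
    · obtain ⟨a, b, h1, h2, h3, h4⟩ := hu u h' hA.1
      exact hA.2.2.1 a b h1 h2 h3 h4
    · exact hA.2.2.2 z (n - 1) (by omega) (by omega) (by omega) hz2

theorem F_F1 {n t s j : ℕ} {q : ℕ → ℕ} (hn : n = t + (j + 1)) (hst : s < t)
    (hd : ∀ a b, t ≤ a → a < b → b < n → q b < q a)
    (hl : ∀ a b, s ≤ a → a < b → b < t → q b < q a)
    (hb : ∀ z x, z < s → t ≤ x → x < n → q z < q x)
    (hz : ∃ z, s ≤ z ∧ z < t ∧ q (n - 1) < q z)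
    (hA : Act n q s) (hu : ∀ u, u < t → u ≠ s → ¬ Act n q u) :
    IsSt (n + 1) (ins t q) (F j) := by
  have e1 : n + 1 - 1 = (n - 1) + 1 := by omega
  refine ⟨t + 1, s, by omega, by omega, ins_mono hd (by omega) (Or.inl ⟨rfl, le_rfl⟩), ?_, ?_, ?_,
    ?_, ?_, ?_⟩
  · intro a b h1 h2 h3
    rw [ins_lt q (show a < t by omega)]
    rcases Nat.lt_succ_iff_lt_or_eq.1 h3 with h | h
    · rw [ins_lt q h]; have := hl a b h1 h2 h; omega
    · rw [h, ins_self]; omega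
  · intro z x h1 h2 h3
    obtain ⟨x, rfl⟩ : ∃ y, x = y + 1 := ⟨x - 1, by omega⟩
    rw [ins_lt q (by omega), ins_gt q (by omega)]
    have := hb z x h1 (by omega) (by omega)
    omega
  · refine ⟨t, by omega, by omega, ?_⟩
    rw [e1, ins_self, ins_gt q (by omega)]; omega
  · obtain ⟨z, h1, h2, h3⟩ := hz
    refine ⟨z, h1, by omega, ?_⟩
    rw [e1, ins_lt q h2, ins_gt q (by omega)]; omega
  · rw [act_ins_le (by omega) (by omega)]
    refine ⟨hA, ?_, ?_, ?_⟩
    · intro b c h1 h2 h3; have := hd b c h1 h2 h3; omega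
    · intro b c h1 h2 h3; have := hl b c h1 h2 h3; omega
    · intro a c h1 h2 h3; have := hb a c h1 h2 h3; omega
  · intro u h1 h2 hA'
    rw [act_ins_le (by omega) (by omega)] at hA'
    rcases Nat.lt_succ_iff_lt_or_eq.1 h1 with h | h
    · exact hu u h h2 hA'.1
    · obtain ⟨z, h3, h4, h5⟩ := hz
      exact hA'.2.2.2 z (n - 1) (by omega) (by omega) (by omega) h5

theorem F_F2 {n t s j : ℕ} {q : ℕ → ℕ} (hn : n = t + (j + 1)) (hst : s < t)
    (hd : ∀ a b, t ≤ a → a < b → b < n → q b < q a)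
    (hl : ∀ a b, s ≤ a → a < b → b < t → q b < q a)
    (hb : ∀ z x, z < s → t ≤ x → x < n → q z < q x)
    (he : ∃ e, s ≤ e ∧ e < t ∧ q e < q (n - 1))
    (hz : ∃ z, s ≤ z ∧ z < t ∧ q (n - 1) < q z)
    (hA : Act n q s) (hu : ∀ u, u < t → u ≠ s → ¬ Act n q u) :
    IsSt (n + 1) (ins s q) (F j) := by
  have e1 : n + 1 - 1 = (n - 1) + 1 := by omega
  have key : ∀ a, s + 1 ≤ a → ins s q a = q (a - 1) + 1 := by
    intro a h
    obtain ⟨a, rfl⟩ : ∃ y, a = y + 1 := ⟨a - 1, by omega⟩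
    rw [ins_gt q (by omega)]; simp
  refine ⟨t + 1, s + 1, by omega, by omega, ?_, ?_, ?_, ?_, ?_, ?_, ?_⟩
  · intro a b h1 h2 h3
    rw [key a (by omega), key b (by omega)]
    have := hd (a - 1) (b - 1) (by omega) (by omega) (by omega); omega
  · intro a b h1 h2 h3
    rw [key a (by omega), key b (by omega)]
    have := hl (a - 1) (b - 1) (by omega) (by omega) (by omega); omega
  · intro z x h1 h2 h3
    rw [key x (by omega)]
    rcases Nat.lt_succ_iff_lt_or_eq.1 h1 with h | h
    · rw [ins_lt q h]
      have := hb z (x - 1) h (by omega) (by omega)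
      omega
    · rw [h, ins_self]; omega
  · obtain ⟨z, h1, h2, h3⟩ := he
    refine ⟨z + 1, by omega, by omega, ?_⟩
    rw [e1, ins_gt q (by omega), ins_gt q (by omega)]; omega
  · obtain ⟨z, h1, h2, h3⟩ := hz
    refine ⟨z + 1, by omega, by omega, ?_⟩
    rw [e1, ins_gt q (by omega), ins_gt q (by omega)]; omega
  · rw [act_ins_gt (by omega) le_rfl]
    exact hA
  · intro u h1 h2 hA'
    rcases lt_trichotomy u s with h | h | h
    · rw [act_ins_le (by omega) (by omega)] at hA'
      exact hu u (by omega) (by omega) hA'.1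
    · rw [act_ins_le (by omega) (by omega)] at hA'
      obtain ⟨e, h3, h4, h5⟩ := he
      exact hA'.2.1 e (n - 1) (by omega) (by omega) (by omega) h5
    · obtain ⟨u, rfl⟩ : ∃ y, u = y + 1 := ⟨u - 1, by omega⟩
      rw [act_ins_gt (by omega) (by omega)] at hA'
      exact hu u (by omega) (by omega) hA'

theorem G_act {n t j b : ℕ} {q : ℕ → ℕ} (hn : n = t + (b + 1) + (j + 1))
    (hd : ∀ x y, t + (b + 1) ≤ x → x < y → y < n → q y < q x)
    (hl : ∀ x y, t ≤ x → x < y → y < t + (b + 1) → q y < q x)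
    (hb : ∀ z x, z < t + (b + 1) → t + (b + 1) ≤ x → x < n → q z < q x) :
    ∀ u, t ≤ u → Act n q u := by
  intro u hu x y z h1 h2 h3
  have a1 := hd x y
  have a2 := hd y z
  have a3 := hl x y
  have a4 := hl y z
  have a5 := hb x y
  have a6 := hb x z
  have a7 := hb y z
  omega

theorem G_G1 {n t j b : ℕ} {q : ℕ → ℕ} (hn : n = t + (b + 1) + (j + 1))
    (hd : ∀ x y, t + (b + 1) ≤ x → x < y → y < n → q y < q x)
    (hl : ∀ x y, t ≤ x → x < y → y < t + (b + 1) → q y < q x)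
    (hb : ∀ z x, z < t + (b + 1) → t + (b + 1) ≤ x → x < n → q z < q x)
    (hu : ∀ u, u < t → ¬ Act n q u) :
    IsSt (n + 1) (ins (t + (b + 1)) q) (G j (b + 1)) := by
  refine ⟨t, by omega, ins_mono hd (by omega) (Or.inl ⟨by omega, le_rfl⟩), ?_, ?_, ?_⟩
  · intro x y h1 h2 h3
    rw [ins_lt q (show x < t + (b + 1) by omega)]
    rcases lt_or_ge y (t + (b + 1)) with h | h
    · rw [ins_lt q h]; have := hl x y h1 h2 h; omega
    · have : y = t + (b + 1) := by omega
      rw [this, ins_self]; omega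
  · intro z x h1 h2 h3
    obtain ⟨x, rfl⟩ : ∃ y, x = y + 1 := ⟨x - 1, by omega⟩
    rw [ins_gt q (show t + (b + 1) ≤ x by omega)]
    rcases lt_or_ge z (t + (b + 1)) with h | h
    · rw [ins_lt q h]; have := hb z x h (by omega) (by omega); omega
    · have : z = t + (b + 1) := by omega
      rw [this, ins_self]; omega
  · intro u h hA
    rw [act_ins_le (by omega) (by omega)] at hA
    exact hu u h hA.1

/- inserting at `v = t + (b - i)` -/
theorem G_G2 {n t j b i v : ℕ} {q : ℕ → ℕ} (hn : n = t + (b + 1) + (j + 1))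
    (hd : ∀ x y, t + (b + 1) ≤ x → x < y → y < n → q y < q x)
    (hl : ∀ x y, t ≤ x → x < y → y < t + (b + 1) → q y < q x)
    (hb : ∀ z x, z < t + (b + 1) → t + (b + 1) ≤ x → x < n → q z < q x)
    (hi : t ≤ v) (hv : v + i = t + b) :
    IsSt (n + 1) (ins v q) (G j i) := by
  have key : ∀ a, v + 1 ≤ a → ins v q a = q (a - 1) + 1 := by
    intro a h
    obtain ⟨a, rfl⟩ : ∃ y, a = y + 1 := ⟨a - 1, by omega⟩
    rw [ins_gt q (by omega)]; simp
  refine ⟨v + 1, by omega, ?_, ?_, ?_, ?_⟩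
  · intro x y h1 h2 h3
    rw [key x (by omega), key y (by omega)]
    have := hd (x - 1) (y - 1) (by omega) (by omega) (by omega); omega
  · intro x y h1 h2 h3
    rw [key x (by omega), key y (by omega)]
    have := hl (x - 1) (y - 1) (by omega) (by omega) (by omega); omega
  · intro z x h1 h2 h3
    rw [key x (by omega)]
    rcases lt_trichotomy z v with h | h | h
    · rw [ins_lt q h]; have := hb z (x - 1) (by omega) (by omega) (by omega); omega
    · rw [h, ins_self]; omega
    · rw [key z (by omega)]
      have := hb (z - 1) (x - 1) (by omega) (by omega) (by omega); omega
  · intro u h hA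
    rw [act_ins_le (by omega) (by omega)] at hA
    exact hA.2.1 (t + b) (n - 1) (by omega) (by omega) (by omega)
      (hb _ _ (by omega) (by omega) (by omega))

theorem G_F {n t j b i v : ℕ} {q : ℕ → ℕ} (hn : n = t + (b + 1) + (j + 1))
    (hd : ∀ x y, t + (b + 1) ≤ x → x < y → y < n → q y < q x)
    (hl : ∀ x y, t ≤ x → x < y → y < t + (b + 1) → q y < q x)
    (hb : ∀ z x, z < t + (b + 1) → t + (b + 1) ≤ x → x < n → q z < q x)
    (hi : i < j) (hv : v + i + 1 = n) :
    IsSt (n + 1) (ins v q) (F i) := by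
  have e1 : n + 1 - 1 = (n - 1) + 1 := by omega
  have hA := G_act hn hd hl hb
  refine ⟨v + 1, t + (b + 1), by omega, by omega,
    ins_mono hd (by omega) (Or.inl ⟨rfl, by omega⟩), ?_, ?_, ?_, ?_, ?_, ?_⟩
  · intro x y h1 h2 h3
    rw [ins_lt q (show x < v by omega)]
    rcases Nat.lt_succ_iff_lt_or_eq.1 h3 with h | h
    · rw [ins_lt q h]; have := hd x y (by omega) h2 (by omega); omega
    · rw [h, ins_self]; omega
  · intro z x h1 h2 h3
    obtain ⟨x, rfl⟩ : ∃ y, x = y + 1 := ⟨x - 1, by omega⟩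
    rw [ins_lt q (by omega), ins_gt q (by omega)]
    have := hb z x h1 (by omega) (by omega)
    omega
  · refine ⟨v, by omega, by omega, ?_⟩
    rw [e1, ins_self, ins_gt q (by omega)]; omega
  · refine ⟨t + (b + 1), le_rfl, by omega, ?_⟩
    rw [e1, ins_lt q (show t + (b + 1) < v by omega), ins_gt q (by omega)]
    have := hd (t + (b + 1)) (n - 1) le_rfl (by omega) (by omega); omega
  · rw [act_ins_le (by omega) (by omega)]
    refine ⟨hA _ (by omega), ?_, ?_, ?_⟩
    · intro x y h1 h2 h3; have := hd x y (by omega) h2 h3; omega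
    · intro x y h1 h2 h3; have := hd x y (by omega) h2 (by omega); omega
    · intro x y h1 h2 h3; have := hb x y h1 (by omega) h3; omega
  · intro u h1 h2 hA'
    rw [act_ins_le (by omega) (by omega)] at hA'
    rcases lt_or_ge u (t + (b + 1)) with h | h
    · exact hA'.2.2.1 (t + b) (t + (b + 1)) (by omega) (by omega) (by omega)
        (hb _ _ (by omega) (by omega) (by omega))
    · exact hA'.2.2.2 (t + (b + 1)) (n - 1) (by omega) (by omega) (by omega)
        (hd _ _ (by omega) (by omega) (by omega))

theorem D_D {n : ℕ} {q : ℕ → ℕ} (hd : ∀ a b, a < b → b < n → q b < q a) :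
    IsSt (n + 1) (ins n q) (D (n + 1)) := by
  refine ⟨rfl, fun a b h1 h2 => ?_⟩
  rw [ins_lt q (show a < n by omega)]
  rcases Nat.lt_succ_iff_lt_or_eq.1 h2 with h | h
  · rw [ins_lt q h]; have := hd a b h1 h; omega
  · rw [h, ins_self]; omega

theorem D_F {n i v : ℕ} {q : ℕ → ℕ} (hd : ∀ a b, a < b → b < n → q b < q a)
    (hv : v + i + 1 = n) (hv0 : 0 < v) :
    IsSt (n + 1) (ins v q) (F i) := by
  have e1 : n + 1 - 1 = (n - 1) + 1 := by omega
  have hd' : ∀ a b, 0 ≤ a → a < b → b < n → q b < q a := fun a b _ h1 h2 => hd a b h1 h2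
  refine ⟨v + 1, 0, by omega, by omega,
    ins_mono hd' (by omega) (Or.inl ⟨rfl, by omega⟩), ?_, ?_, ?_, ?_, ?_, ?_⟩
  · intro x y h1 h2 h3
    rw [ins_lt q (show x < v by omega)]
    rcases Nat.lt_succ_iff_lt_or_eq.1 h3 with h | h
    · rw [ins_lt q h]; have := hd x y (by omega) (by omega); omega
    · rw [h, ins_self]; omega
  · intro z x h1; omega
  · refine ⟨v, by omega, by omega, ?_⟩
    rw [e1, ins_self, ins_gt q (by omega)]; omega
  · refine ⟨0, le_rfl, by omega, ?_⟩
    rw [e1, ins_lt q (show 0 < v by omega), ins_gt q (by omega)]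
    have := hd 0 (n - 1) (by omega) (by omega); omega
  · rw [act_ins_le (by omega) (by omega)]
    refine ⟨act_top hd' le_rfl, ?_, ?_, ?_⟩
    · intro x y h1 h2 h3; have := hd x y h2 h3; omega
    · intro x y h1 h2 h3; have := hd x y h2 (by omega); omega
    · intro x y h1; omega
  · intro u h1 h2 hA'
    rw [act_ins_le (by omega) (by omega)] at hA'
    exact hA'.2.2.2 0 (n - 1) (by omega) (by omega) (by omega)
        (hd _ _ (by omega) (by omega))

theorem D_G {n : ℕ} {q : ℕ → ℕ} (hd : ∀ a b, a < b → b < n + 1 → q b < q a) :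
    IsSt (n + 1 + 1) (ins 0 q) (G n 0) := by
  have hd' : ∀ a b, 0 ≤ a → a < b → b < n + 1 → q b < q a := fun a b _ h1 h2 => hd a b h1 h2
  refine ⟨0, by omega, ins_mono hd' (by omega) (Or.inl ⟨rfl, by omega⟩), ?_, ?_, ?_⟩
  · intro x y h1 h2 h3; omega
  · intro z x h1 h2 h3
    have : z = 0 := by omega
    obtain ⟨x, rfl⟩ : ∃ y, x = y + 1 := ⟨x - 1, by omega⟩
    rw [this, ins_self, ins_gt q (by omega)]; omega
  · intro u h; omega

theorem sum_cut {n K : ℕ} {h : ℕ → ℕ} (hK : K ≤ n) (h0 : ∀ i, K ≤ i → i < n → h i = 0) :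
    ∑ i ∈ Finset.range n, h i = ∑ i ∈ Finset.range K, h i := by
  symm
  apply Finset.sum_subset
  · intro x; simp only [Finset.mem_range]; omega
  · intro x; simp only [Finset.mem_range]; intro h1 h2; exact h0 x (by omega) h1

theorem sum_split (j b : ℕ) (h : ℕ → ℕ) :
    ∑ i ∈ Finset.range (j + 2 + b), h i =
      h 0 + ∑ i ∈ Finset.range j, h (i + 1) + h (j + 1) + ∑ i ∈ Finset.range b, h (j + 2 + i) := by
  rw [Finset.sum_range_add, Finset.sum_range_succ, Finset.sum_range_succ']
  ring

open Classical in
theorem E_eq_W : ∀ (m n : ℕ) (q : ℕ → ℕ) (s : St), IsSt n q s → E m n q = W m s := by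
  intro m
  induction m with
  | zero => intro n q s _; cases s <;> simp [E, W]
  | succ m ih =>
    intro n q s hs
    simp only [E]
    set h : ℕ → ℕ := fun i => if Act n q (n - i) then E m (n + 1) (ins (n - i) q) else 0 with hh
    have hval : ∀ i s', Act n q (n - i) → IsSt (n + 1) (ins (n - i) q) s' → h i = W m s' := by
      intro i s' h1 h2
      simp only [hh, if_pos h1]
      exact ih _ _ _ h2
    have hzero : ∀ i, ¬ Act n q (n - i) → h i = 0 := by
      intro i h1
      simp only [hh, if_neg h1]
    change ∑ i ∈ Finset.range (n + 1), h i = _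
    clear_value h
    cases s with
    | N k =>
      obtain ⟨t, hn, hd, hz, hu⟩ := hs
      have ht : 0 < t := by obtain ⟨z, h1, _⟩ := hz; omega
      rw [sum_cut (K := k + 2) (by omega)
        (fun i h1 h2 => hzero i (hu _ (by omega))), Finset.sum_range_succ']
      simp only [W]
      rw [add_comm]
      congr 1
      · refine hval 0 _ (act_top hd (by omega)) ?_
        exact toN_top (t := t) (by omega) ht hd (fun u h1 h2 => absurd h2 (hu u h1))
      · refine Finset.sum_congr rfl fun i hi => ?_
        rw [Finset.mem_range] at hi
        refine hval _ _ (act_top hd (by omega)) ?_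
        exact toN_mid (t := t) (by omega) (by omega) hd hz (fun u h1 h2 => absurd h2 (hu u h1))
    | F j =>
      obtain ⟨t, s, hn, hst, hd, hl, hb, he, hz, hA, hu⟩ := hs
      have e1 : ∑ i ∈ Finset.range (n + 1), h i = ∑ i ∈ Finset.range (j + 2 + 0), h i + h (n - s) := by
        rw [← Finset.sum_erase_add (Finset.range (n + 1)) h (a := n - s)
          (by simp only [Finset.mem_range]; omega)]
        congr 1
        symm
        apply Finset.sum_subset
        · intro x; simp only [Finset.mem_range, Finset.mem_erase]; omega
        · intro x; simp only [Finset.mem_range, Finset.mem_erase]; intro h1 h2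
          exact hzero x (hu _ (by omega) (by omega))
      obtain ⟨e, he1, he2, he3⟩ := he
      have hz' := hz
      obtain ⟨z, hz1, hz2, hz3⟩ := hz
      rw [e1, sum_split]
      simp only [W, Finset.range_zero, Finset.sum_empty, add_zero]
      congr 1
      · congr 1
        · congr 1
          · refine hval 0 _ (act_top hd (by omega)) ?_
            refine toN_top (t := t) (by omega) (by omega) hd fun u h1 h2 => ?_
            have : u = s := by by_contra h3; exact hu u h1 h3 h2
            exact ⟨e, n - 1, by omega, by omega, by omega, he3⟩
          · refine Finset.sum_congr rfl fun i hi => ?_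
            rw [Finset.mem_range] at hi
            refine hval _ _ (act_top hd (by omega)) ?_
            refine toN_mid (t := t) (by omega) (by omega) hd ⟨z, hz2, hz3⟩ fun u h1 h2 => ?_
            have : u = s := by by_contra h3; exact hu u h1 h3 h2
            have h4 := hd t (n - 1) le_rfl (by omega) (by omega)
            exact ⟨e, t, by omega, by omega, by omega, by omega⟩
        · refine hval _ _ (act_top hd (by omega)) ?_
          have : n - (j + 1) = t := by omega
          rw [this]
          exact F_F1 hn hst hd hl hb hz' hA hu
      · have : n - (n - s) = s := by omega
        refine hval _ _ (by rw [this]; exact hA) ?_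
        rw [this]
        exact F_F2 hn hst hd hl hb ⟨e, he1, he2, he3⟩ hz' hA hu
    | G j b =>
      obtain ⟨t, hn, hd, hl, hb, hu⟩ := hs
      have hA := G_act hn hd hl hb
      rw [sum_cut (K := j + 2 + (b + 1)) (by omega)
        (fun i h1 h2 => hzero i (hu _ (by omega))), sum_split]
      simp only [W]
      congr 1
      · congr 1
        · congr 1
          · refine hval 0 _ (hA _ (by omega)) ?_
            refine toN_top (t := t + (b + 1)) (by omega) (by omega) hd fun u h1 h2 => ?_
            exact ⟨t + b, t + (b + 1), by omega, by omega, by omega,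
              hb _ _ (by omega) (by omega) (by omega)⟩
          · refine Finset.sum_congr rfl fun i hi => ?_
            rw [Finset.mem_range] at hi
            exact hval _ _ (hA _ (by omega)) (G_F hn hd hl hb hi (by omega))
        · refine hval _ _ (hA _ (by omega)) ?_
          have : n - (j + 1) = t + (b + 1) := by omega
          rw [this]
          exact G_G1 hn hd hl hb hu
      · refine Finset.sum_congr rfl fun i hi => ?_
        rw [Finset.mem_range] at hi
        exact hval _ _ (hA _ (by omega)) (G_G2 hn hd hl hb (by omega) (by omega))
    | D k =>
      obtain ⟨hn, hd⟩ := hs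
      subst hn
      have hA : ∀ u, Act n q u := fun u =>
        act_top (t := 0) (fun a b _ h1 h2 => hd a b h1 h2) (Nat.zero_le _)
      cases n with
      | zero =>
        simp only [W, Finset.sum_range_one, zero_add]
        exact hval 0 _ (hA _) (D_D hd)
      | succ n =>
        have e1 : n + 1 + 1 = n + 2 + 0 := rfl
        rw [e1, sum_split]
        simp only [W, Finset.range_zero, Finset.sum_empty, add_zero]
        congr 1
        · congr 1
          · exact hval 0 _ (hA _) (D_D hd)
          · refine Finset.sum_congr rfl fun i hi => ?_
            rw [Finset.mem_range] at hi
            exact hval _ _ (hA _) (D_F hd (by omega) (by omega))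
        · refine hval _ _ (hA _) ?_
          rw [Nat.sub_self]
          exact D_G hd

def qp {n : ℕ} (π : Equiv.Perm (Fin n)) (a : ℕ) : ℕ :=
  if h : a < n then (π.symm ⟨a, h⟩ : ℕ) else a

theorem insP_bij {n : ℕ} (v : Fin (n + 1)) (π : Equiv.Perm (Fin n)) :
    Function.Bijective (Fin.cons v (fun i => v.succAbove (π i)) : Fin (n + 1) → Fin (n + 1)) := by
  rw [← Finite.injective_iff_bijective, Fin.cons_injective_iff]
  refine ⟨?_, fun i j h => π.injective (Fin.succAbove_right_injective h)⟩
  rintro ⟨i, hi⟩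
  exact Fin.succAbove_ne _ _ hi

noncomputable def insP {n : ℕ} (v : Fin (n + 1)) (π : Equiv.Perm (Fin n)) :
    Equiv.Perm (Fin (n + 1)) := Equiv.ofBijective _ (insP_bij v π)

theorem insP_zero {n : ℕ} (v : Fin (n + 1)) (π : Equiv.Perm (Fin n)) : insP v π 0 = v := rfl
theorem insP_succ {n : ℕ} (v : Fin (n + 1)) (π : Equiv.Perm (Fin n)) (i : Fin n) :
    insP v π i.succ = v.succAbove (π i) := rfl

theorem insP_bijective (n : ℕ) :
    Function.Bijective (fun p : Fin (n + 1) × Equiv.Perm (Fin n) => insP p.1 p.2) := by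
  rw [Fintype.bijective_iff_injective_and_card]
  constructor
  · rintro ⟨v, π⟩ ⟨w, ρ⟩ h
    simp only at h
    have h0 : v = w := by rw [← insP_zero v π, h, insP_zero]
    subst h0
    have h1 : π = ρ := by
      ext i
      have : insP v π i.succ = insP v ρ i.succ := by rw [h]
      rw [insP_succ, insP_succ] at this
      rw [Fin.succAbove_right_injective this]
    rw [h1]
  · simp [Fintype.card_perm, Nat.factorial_succ]

theorem qp_insP {n : ℕ} (v : Fin (n + 1)) (π : Equiv.Perm (Fin n)) :
    qp (insP v π) = ins v (qp π) := by
  funext a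
  rcases sh_cases (v : ℕ) a with h | ⟨b, rfl⟩
  · subst h
    rw [ins_self]
    have : (insP v π).symm v = 0 := by rw [Equiv.symm_apply_eq, insP_zero]
    unfold qp
    rw [dif_pos v.is_lt, Fin.eta, this]; rfl
  · rw [ins_sh]
    have hv : (v : ℕ) ≤ n := by omega
    unfold qp
    by_cases hb : b < n
    · rw [dif_pos hb, dif_pos ((sh_lt_n hv).2 hb)]
      have : (insP v π).symm ⟨sh v b, (sh_lt_n hv).2 hb⟩ = (π.symm ⟨b, hb⟩).succ := by
        rw [Equiv.symm_apply_eq, insP_succ, Equiv.apply_symm_apply]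
        ext
        simp only [Fin.succAbove, sh, Fin.lt_def, Fin.val_castSucc]
        split_ifs <;> simp
      rw [this]; simp
    · rw [dif_neg hb, dif_neg (by rw [sh_lt_n hv]; exact hb)]
      unfold sh; split_ifs <;> omega

open Classical in
noncomputable def cnt (n m : ℕ) : ℕ :=
  ∑ π : Equiv.Perm (Fin n), if Av n (qp π) then E m n (qp π) else 0

open Classical in
theorem cnt_step (n m : ℕ) : cnt (n + 1) m = cnt n (m + 1) := by
  unfold cnt
  rw [← (insP_bijective n).sum_comp (fun π => if Av (n + 1) (qp π) then E m (n + 1) (qp π) else 0),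
    Fintype.sum_prod_type_right]
  refine Finset.sum_congr rfl fun π _ => ?_
  simp only [qp_insP]
  rw [Fin.sum_univ_eq_sum_range (fun v => if Av (n + 1) (ins v (qp π)) then
    E m (n + 1) (ins v (qp π)) else 0), ← Finset.sum_range_reflect]
  by_cases h : Av n (qp π)
  · rw [if_pos h, E]
    refine Finset.sum_congr rfl fun i hi => ?_
    have e : n + 1 - 1 - i = n - i := by omega
    rw [e, av_ins (by omega)]
    simp only [h, true_and]
  · rw [if_neg h]
    refine Finset.sum_eq_zero fun i hi => ?_
    rw [av_ins (by omega), if_neg (by tauto)]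

theorem cnt_zero (m : ℕ) : ∀ n, cnt n m = cnt 0 (n + m) := by
  intro n
  induction n generalizing m with
  | zero => simp
  | succ n ih => rw [cnt_step, ih]; congr 1; omega

theorem cnt_W (m : ℕ) : cnt 0 m = W m (D 0) := by
  unfold cnt
  rw [Fintype.sum_unique, if_pos (by intro a b c d _ _ _ h; omega)]
  exact E_eq_W _ _ _ _ ⟨rfl, by intro a b _ h; omega⟩

theorem qp_apply {n : ℕ} (π : Equiv.Perm (Fin n)) (i : Fin n) : qp π (π i) = i := by
  simp [qp]

theorem qp_eq {n : ℕ} (π : Equiv.Perm (Fin n)) (a : ℕ) (h : a < n) :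
    ∃ i : Fin n, qp π a = i ∧ (π i : ℕ) = a := by
  refine ⟨π.symm ⟨a, h⟩, by simp [qp, h], by simp⟩

/-- build an order embedding from 4 increasing positions -/
theorem emb4 {n : ℕ} {i j k l : Fin n} (h1 : i < j) (h2 : j < k) (h3 : k < l) :
    ∃ f : Fin 4 ↪o Fin n, f 0 = i ∧ f 1 = j ∧ f 2 = k ∧ f 3 = l := by
  have hm : StrictMono ![i, j, k, l] := by
    rw [Fin.strictMono_iff_lt_succ]
    intro a
    fin_cases a
    · exact h1
    · exact h2
    · exact h3
  exact ⟨OrderEmbedding.ofStrictMono _ hm, rfl, rfl, rfl, rfl⟩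

theorem av_iff {n : ℕ} (π : Equiv.Perm (Fin n)) :
    (∀ σ ∈ ({![0,1,2,3], ![0,3,1,2], ![1,2,3,0]} : Set (Fin 4 → Fin 4)), ¬ ContainsPattern π σ) ↔
      Av n (qp π) := by
  simp only [Set.mem_insert_iff, Set.mem_singleton_iff, forall_eq_or_imp, forall_eq]
  constructor
  · rintro ⟨h1, h2, h3⟩ a b c d hab hbc hcd hd
    obtain ⟨i, hi, rfl⟩ := qp_eq π a (by omega)
    obtain ⟨j, hj, rfl⟩ := qp_eq π b (by omega)
    obtain ⟨k, hk, rfl⟩ := qp_eq π c (by omega)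
    obtain ⟨l, hl, rfl⟩ := qp_eq π d (by omega)
    rw [hi, hj, hk, hl]
    refine ⟨?_, ?_, ?_⟩
    · rintro ⟨g1, g2, g3⟩
      obtain ⟨f, f0, f1, f2, f3⟩ := emb4 (Fin.lt_def.2 g1) (Fin.lt_def.2 g2) (Fin.lt_def.2 g3)
      refine h1 ⟨f, ?_⟩
      simp only [Fin.forall_fin_succ, Fin.lt_def]
      simp [f0, f1, f2, f3]
      omega
    · rintro ⟨g1, g2, g3⟩
      obtain ⟨f, f0, f1, f2, f3⟩ := emb4 (Fin.lt_def.2 g1) (Fin.lt_def.2 g2) (Fin.lt_def.2 g3)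
      refine h2 ⟨f, ?_⟩
      simp only [Fin.forall_fin_succ, Fin.lt_def]
      simp [f0, f1, f2, f3]
      omega
    · rintro ⟨g1, g2, g3⟩
      obtain ⟨f, f0, f1, f2, f3⟩ := emb4 (Fin.lt_def.2 g1) (Fin.lt_def.2 g2) (Fin.lt_def.2 g3)
      refine h3 ⟨f, ?_⟩
      simp only [Fin.forall_fin_succ, Fin.lt_def]
      simp [f0, f1, f2, f3]
      omega
  · intro h
    have hf : ∀ f : Fin 4 ↪o Fin n, (f 0 : ℕ) < f 1 ∧ (f 1 : ℕ) < f 2 ∧ (f 2 : ℕ) < f 3 := by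
      intro f
      exact ⟨f.strictMono (by decide), f.strictMono (by decide), f.strictMono (by decide)⟩
    refine ⟨?_, ?_, ?_⟩
    · rintro ⟨f, hfσ⟩
      have a1 := (hfσ 0 1).1 (by decide)
      have a2 := (hfσ 1 2).1 (by decide)
      have a3 := (hfσ 2 3).1 (by decide)
      have := h _ _ _ _ (Fin.lt_def.1 a1) (Fin.lt_def.1 a2) (Fin.lt_def.1 a3) (Fin.is_lt _)
      simp only [qp_apply] at this
      have := hf f
      omega
    · rintro ⟨f, hfσ⟩
      have a1 := (hfσ 0 2).1 (by decide)
      have a2 := (hfσ 2 3).1 (by decide)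
      have a3 := (hfσ 3 1).1 (by decide)
      have := h _ _ _ _ (Fin.lt_def.1 a1) (Fin.lt_def.1 a2) (Fin.lt_def.1 a3) (Fin.is_lt _)
      simp only [qp_apply] at this
      have := hf f
      omega
    · rintro ⟨f, hfσ⟩
      have a1 := (hfσ 3 0).1 (by decide)
      have a2 := (hfσ 0 1).1 (by decide)
      have a3 := (hfσ 1 2).1 (by decide)
      have := h _ _ _ _ (Fin.lt_def.1 a1) (Fin.lt_def.1 a2) (Fin.lt_def.1 a3) (Fin.is_lt _)
      simp only [qp_apply] at this
      have := hf f
      omega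

open Classical in
theorem count_eq (n : ℕ) :
    avoiderCount ({![0,1,2,3], ![0,3,1,2], ![1,2,3,0]} : Set (Fin 4 → Fin 4)) n = W n (D 0) := by
  rw [← cnt_W, ← Nat.add_zero n, ← cnt_zero 0 n]
  unfold avoiderCount cnt
  simp only [av_iff, E, Nat.add_zero]
  rw [Nat.card_eq_fintype_card, Fintype.card_subtype, Finset.card_filter]

theorem cat_eq : (X : PowerSeries ℚ) * catalanGF ^ 2 - catalanGF + 1 = 0 := by
  have h := congrArg (PowerSeries.map (Nat.castRingHom ℚ)) catalanSeries_sq_mul_X_add_one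
  have e : PowerSeries.map (Nat.castRingHom ℚ) catalanSeries = catalanGF := by
    ext n
    simp [catalanGF]
  simp only [map_add, map_mul, map_pow, e, map_one, PowerSeries.map_X] at h
  linear_combination h

theorem gf_unique (f : St → PowerSeries ℚ)
    (hN : ∀ k, f (N k) = 1 + X * (f (N (k + 1)) + ∑ i ∈ Finset.range (k + 1), f (N i)))
    (hF : ∀ j, f (F j) = 1 + X * (f (N (j + 1)) + ∑ i ∈ Finset.range j, f (N i) + f (F j) + f (F j)))
    (hG : ∀ j b, f (G j b) = 1 + X * (f (N (j + 1)) + ∑ i ∈ Finset.range j, f (F i) +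
      f (G j (b + 1)) + ∑ i ∈ Finset.range (b + 1), f (G j i)))
    (hD0 : f (D 0) = 1 + X * f (D 1))
    (hD : ∀ n, f (D (n + 1)) = 1 + X * (f (D (n + 2)) + ∑ i ∈ Finset.range n, f (F i) + f (G n 0))) :
    ∀ m s, coeff m (f s) = (W m s : ℚ) := by
  intro m
  induction m with
  | zero =>
    intro s
    have h1 : ∀ g : PowerSeries ℚ, coeff 0 (1 + X * g) = 1 := by intro g; simp
    have : W 0 s = 1 := by cases s <;> simp [W]
    rw [this, Nat.cast_one]
    cases s with
    | N k => rw [hN]; exact h1 _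
    | F k => rw [hF]; exact h1 _
    | G k b => rw [hG]; exact h1 _
    | D k => cases k with
      | zero => rw [hD0]; exact h1 _
      | succ k => rw [hD]; exact h1 _
  | succ m ih =>
    intro s
    have h1 : ∀ g : PowerSeries ℚ, coeff (m + 1) (1 + X * g) = coeff m g := by
      intro g; simp [coeff_succ_X_mul, coeff_one]
    cases s with
    | N k => rw [hN, h1]; simp only [map_add, map_sum, ih, W]; push_cast; rfl
    | F k => rw [hF, h1]; simp only [map_add, map_sum, ih, W]; push_cast; rfl
    | G k b => rw [hG, h1]; simp only [map_add, map_sum, ih, W]; push_cast; rfl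
    | D k => cases k with
      | zero => rw [hD0, h1]; simp only [ih, W]
      | succ k => rw [hD, h1]; simp only [map_add, map_sum, ih, W]; push_cast; rfl

section alg
variable {R : Type*} [CommRing R]

def pp (x c : R) : R := (1 - x * c) ^ 2 + x * c
def al (x c u w : R) : R := w * c * (1 - u * pp x c)
def be (x c u : R) : R := c * (u * pp x c * c + (c - 1) * x * c ^ 3)
def kk (x c u : R) (j : ℕ) : R := 1 + u * (c ^ j - 1) * pp x c + x * c ^ (j + 3)

def ff (x c u w : R) : St → R
  | N k => c ^ (k + 2)
  | F j => u * (c ^ j + x * c ^ (j + 3))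
  | G j b => c ^ (b + 2) * kk x c u j
  | D 0 => 1 + x * (al x c u w + be x c u)
  | D (n + 1) => al x c u w + be x c u * c ^ n

theorem sumN (x c : R) (hc : x * c ^ 2 - c + 1 = 0) (k : ℕ) :
    x * ∑ i ∈ Finset.range k, c ^ (i + 2) = c ^ k - 1 := by
  induction k with
  | zero => simp
  | succ k ih =>
    rw [Finset.sum_range_succ, mul_add, ih]
    linear_combination c ^ k * hc

theorem sumF (x c u : R) (hc : x * c ^ 2 - c + 1 = 0) (k : ℕ) :
    x * ∑ i ∈ Finset.range k, u * (c ^ i + x * c ^ (i + 3)) = u * (c ^ k - 1) * pp x c := by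
  induction k with
  | zero => simp
  | succ k ih =>
    rw [Finset.sum_range_succ, mul_add, ih]
    unfold pp
    linear_combination (u * c ^ k * (1 + x)) * hc

theorem ffN (x c u w : R) (hc : x * c ^ 2 - c + 1 = 0) (k : ℕ) :
    ff x c u w (N k) = 1 + x * (ff x c u w (N (k + 1)) +
      ∑ i ∈ Finset.range (k + 1), ff x c u w (N i)) := by
  simp only [ff]
  rw [mul_add, sumN x c hc]
  linear_combination (-c ^ (k + 1)) * hc

theorem ffF (x c u w : R) (hc : x * c ^ 2 - c + 1 = 0) (hu : u * (1 - 2 * x) = 1) (j : ℕ) :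
    ff x c u w (F j) = 1 + x * (ff x c u w (N (j + 1)) +
      ∑ i ∈ Finset.range j, ff x c u w (N i) + ff x c u w (F j) + ff x c u w (F j)) := by
  simp only [ff]
  linear_combination (c ^ j + x * c ^ (j + 3)) * hu - sumN x c hc j

theorem ffG (x c u w : R) (hc : x * c ^ 2 - c + 1 = 0) (j b : ℕ) :
    ff x c u w (G j b) = 1 + x * (ff x c u w (N (j + 1)) + ∑ i ∈ Finset.range j, ff x c u w (F i) +
      ff x c u w (G j (b + 1)) + ∑ i ∈ Finset.range (b + 1), ff x c u w (G j i)) := by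
  simp only [ff]
  rw [← Finset.sum_mul, mul_add, mul_add, mul_add, sumF x c u hc, ← mul_assoc x (∑ i ∈ _, _),
    sumN x c hc]
  have : x * c ^ (j + 1 + 2) + u * (c ^ j - 1) * pp x c = kk x c u j - 1 := by
    unfold kk; ring
  rw [this]
  linear_combination (-c ^ (b + 1) * kk x c u j) * hc

theorem ffD (x c u w : R) (hc : x * c ^ 2 - c + 1 = 0) (hw : w * (1 - x) = 1)
    (n : ℕ) :
    ff x c u w (D (n + 1)) = 1 + x * (ff x c u w (D (n + 2)) +
      ∑ i ∈ Finset.range n, ff x c u w (F i) + ff x c u w (G n 0)) := by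
  simp only [ff]
  rw [mul_add, mul_add, sumF x c u hc]
  unfold kk al be
  generalize pp x c = p
  generalize hcn : c ^ n = y
  have e1 : c ^ (n + 1) = c * y := by rw [pow_succ, hcn]; ring
  have e2 : c ^ (n + 3) = c ^ 3 * y := by rw [pow_add, hcn]; ring
  rw [e1, e2]
  have hb : c * (1 - x * c) = 1 := by linear_combination -hc
  linear_combination (c * (1 - u * p)) * hw + (u * p * c + (c - 1) * x * c ^ 3) * y * hb
    - (1 + u * (y - 1) * p + x * (c ^ 3 * y)) * hc

theorem ff_final (x c u w : R) (hc : x * c ^ 2 - c + 1 = 0) (hu : u * (1 - 2 * x) = 1)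
    (hw : w * (1 - x) = 1) :
    x ^ 2 * (1 - x) * (1 - 2 * x) * ff x c u w (D 0) =
      (1 - 7 * x + 18 * x ^ 2 - 19 * x ^ 3 + 6 * x ^ 4) * c
        - (1 - 6 * x + 12 * x ^ 2 - 8 * x ^ 3 + x ^ 4) := by
  simp only [ff]
  have ha : (1 - x) * (1 - 2 * x) * al x c u w = c * ((1 - 2 * x) - pp x c) := by
    unfold al
    linear_combination c * ((1 - 2 * x) - u * (1 - 2 * x) * pp x c) * hw - c * pp x c * hu
  have hb : (1 - x) * (1 - 2 * x) * be x c u =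
      (1 - x) * c * (pp x c * c + (1 - 2 * x) * (c - 1) * x * c ^ 3) := by
    unfold be
    linear_combination (1 - x) * c * pp x c * c * hu
  unfold pp at ha hb
  linear_combination x ^ 3 * ha + x ^ 3 * hb + (1 - 6 * x + x * c + 13 * x ^ 2 - 5 * x ^ 2 * c
    + x ^ 2 * c ^ 2 - 11 * x ^ 3 + 8 * x ^ 3 * c - 4 * x ^ 3 * c ^ 2 + x ^ 3 * c ^ 3 + 3 * x ^ 4
    - 5 * x ^ 4 * c + 6 * x ^ 4 * c ^ 2 - 3 * x ^ 4 * c ^ 3 - 3 * x ^ 5 * c ^ 2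
    + 2 * x ^ 5 * c ^ 3) * hc

end alg

theorem main :
    (X : PowerSeries ℚ)^2 * (1 - X) * (1 - 2*X) * avoiderGF ({![0,1,2,3], ![0,3,1,2], ![1,2,3,0]} : Set (Fin 4 → Fin 4)) =
      (1 - 7*X + 18*X^2 - 19*X^3 + 6*X^4) * catalanGF - (1 - 6*X + 12*X^2 - 8*X^3 + X^4) := by
  have hu : (1 - 2 * X : PowerSeries ℚ)⁻¹ * (1 - 2 * X) = 1 :=
    PowerSeries.inv_mul_cancel _ (by simp)
  have hw : (1 - X : PowerSeries ℚ)⁻¹ * (1 - X) = 1 :=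
    PowerSeries.inv_mul_cancel _ (by simp)
  have hc := cat_eq
  have key := gf_unique (ff X catalanGF (1 - 2 * X : PowerSeries ℚ)⁻¹ (1 - X : PowerSeries ℚ)⁻¹)
    (ffN _ _ _ _ hc) (ffF _ _ _ _ hc hu) (ffG _ _ _ _ hc) (by simp [ff]) (ffD _ _ _ _ hc hw)
  have e : avoiderGF ({![0,1,2,3], ![0,3,1,2], ![1,2,3,0]} : Set (Fin 4 → Fin 4)) =
      ff X catalanGF (1 - 2 * X : PowerSeries ℚ)⁻¹ (1 - X : PowerSeries ℚ)⁻¹ (D 0) := by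
    ext n
    rw [key, avoiderGF, coeff_mk, count_eq]
  rw [e]
  exact ff_final _ _ _ _ hc hu hw

end T15

theorem statement_15 :
    (X : PowerSeries ℚ)^2 * (1 - X) * (1 - 2*X) * avoiderGF ({![0,1,2,3], ![0,3,1,2], ![1,2,3,0]} : Set (Fin 4 → Fin 4)) =
      (1 - 7*X + 18*X^2 - 19*X^3 + 6*X^4) * catalanGF - (1 - 6*X + 12*X^2 - 8*X^3 + X^4) :=
  T15.main
end

section
/- Let T = {1243, 1423, 2341} (patterns of length 4). Then the generating function for T-avoiders satisfies, as formal power series over ℚ, (x·C(x) - (x-1)^2)·(x-1)^2·(2x-1)·F_T(x) = x·(x-1)^2·(2x-1)·C(x) + (3x^4 - 7x^3 + 9x^2 - 5x + 1), where C(x) is the Catalan number generating function. -/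
open PowerSeries

set_option linter.unusedTactic false
set_option linter.unreachableTactic false
set_option linter.unusedSimpArgs false

lemma catalanGF_eq : catalanGF = 1 + X * catalanGF ^ 2 := by
  ext n
  rcases n with _ | n
  · simp [catalanGF]
  · rw [map_add, coeff_succ_X_mul, sq, coeff_mul]
    simp only [catalanGF, coeff_mk, catalan_succ', coeff_one]
    simp

structure Sys (x : PowerSeries ℚ) where
  al : ℕ → PowerSeries ℚ
  be : ℕ → ℕ → PowerSeries ℚ
  de : ℕ → PowerSeries ℚ
  hal : ∀ k, al (k+1) = 1 + x * (al (k+2) + be 0 0 + ∑ j ∈ Finset.range k, al (j+2))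
  hbe : ∀ s t, be (s+1) t = 1 + x * (be (s+2) t + be 0 0 + ∑ j ∈ Finset.range (s+1), al (j+2)
    + ∑ j ∈ Finset.range (t+1), de (j+2))
  hbz : ∀ t, be 0 t = 1 + x * (be 1 t + be 0 (t+1) + be 0 0 + ∑ j ∈ Finset.range t, al (j+2))
  hde : ∀ m, de (m+1) = 1 + x * (∑ j ∈ Finset.range (m+1), de (j+1))

lemma exists_inv (f : PowerSeries ℚ) (h : constantCoeff f = 1) : ∃ g, g * f = 1 :=
  ⟨f⁻¹, PowerSeries.inv_mul_cancel f (by rw [h]; norm_num)⟩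

lemma exists_sys : ∃ S : Sys X,
    ((X : PowerSeries ℚ) * catalanGF - (X - 1)^2) * (X - 1)^2 * (2*X - 1) * (1 + X * S.al 1) =
      X * (X - 1)^2 * (2*X - 1) * catalanGF + (3*X^4 - 7*X^3 + 9*X^2 - 5*X + 1) := by
  have hC := catalanGF_eq
  set C := catalanGF with hCdef
  obtain ⟨D, hD⟩ := exists_inv (1 - X) (by simp)
  obtain ⟨E, hE⟩ := exists_inv (1 - 2 * X) (by simp)
  obtain ⟨R, hR⟩ := exists_inv ((1 - X)^2 - X * C) (by simp)
  generalize (X : PowerSeries ℚ) = x at *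
  obtain ⟨g, hg⟩ : ∃ g, g = R * (1 - x * C) * (2 * C - 1 - x * C + x^2 * D^2 * E) := ⟨_, rfl⟩
  have hg2 : C * ((1 - x)^2 - x * C) * g = 2 * C - 1 - x * C + x^2 * D^2 * E := by
    have h1 : C * (1 - x * C) = 1 := by linear_combination hC
    rw [hg]
    linear_combination (C * (1 - x * C)) * (2 * C - 1 - x * C + x^2 * D^2 * E) * hR
      + (2 * C - 1 - x * C + x^2 * D^2 * E) * h1
  clear_value C
  clear hg hR
  obtain ⟨q, hq⟩ : ∃ q, q = 1 + x * g := ⟨_, rfl⟩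
  obtain ⟨s, hs⟩ : ∃ s, s = x * D^2 * E := ⟨_, rfl⟩
  obtain ⟨w, hw⟩ : ∃ w, w = g - q * C - s := ⟨_, rfl⟩
  -- sums
  have hsal : ∀ k, x * ∑ j ∈ Finset.range k, q * C^(j+2) = q * C^k - q := by
    intro k
    induction k with
    | zero => simp
    | succ k ih =>
      rw [Finset.sum_range_succ, mul_add, ih]
      linear_combination (- q * C^k) * hC
  have hsde : ∀ k, x * ∑ j ∈ Finset.range k, D^(j+1) = D^k - 1 := by
    intro k
    induction k with
    | zero => simp
    | succ k ih =>
      rw [Finset.sum_range_succ, mul_add, ih]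
      linear_combination (- D^k) * hD
  have hsde2 : ∀ k, x * ∑ j ∈ Finset.range k, D^(j+2) = D^(k+1) - D := by
    intro k
    have : ∑ j ∈ Finset.range k, D^(j+2) = D * ∑ j ∈ Finset.range k, D^(j+1) := by
      rw [Finset.mul_sum]; exact Finset.sum_congr rfl fun j _ => by ring
    rw [this]
    linear_combination D * hsde k
  have hxD : x * D = D - 1 := by linear_combination -hD
  have hDE : D - E = - x * D * E := by linear_combination E * hD - D * hE
  have h0 : w + q * C + s = g := by rw [hw]; ring
  have hED : E * (2 - D) = D := by linear_combination D * hE - 2 * E * hD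
  have hw2 : w * (1 - x) + x * D^2 - x * q * C^2 = 0 := by
    have e1 : s * (1 - x) = x * D * E := by rw [hs]; linear_combination x * D * E * hD
    have e2 : g * (1 - 2 * x * C + x^2 * C) = 2 * C - 1 - x * C + x^2 * D^2 * E := by
      linear_combination hg2 - g * hC
    rw [hw]
    linear_combination (-1) * e1 + e2 + x * D * hDE + q * hC + (1 - 2 * C + x * C) * hq
  refine ⟨⟨fun k => q * C^k,
    fun a t => if a = 0 then w + q * C^(t+1) + s * D^t else D^(t+3) - D^2 + q * C^(a+1),
    fun m => D^m, ?_, ?_, ?_, ?_⟩, ?_⟩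
  · intro k
    simp only [if_true, mul_add, hsal]
    linear_combination q * C^k * hC - x * h0 + hq
  · intro a t
    simp only [if_true, mul_add, hsal, hsde2]
    simp only [Nat.succ_ne_zero, Nat.add_eq_zero_iff, if_false, OfNat.ofNat_ne_zero, one_ne_zero, and_false]
    linear_combination q * C^(a+1) * hC - x * h0 + hq + (D^(t+2) - D) * hD
  · intro t
    simp only [if_true, mul_add, hsal]
    simp only [Nat.succ_ne_zero, if_false, one_ne_zero]
    linear_combination q * C^t * hC - x * h0 + hq + hw2 - s * D^t * hxD + D^t * (2 - D) * hs
      + x * D^(t+2) * hED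
  · intro m
    rw [hsde]; ring
  · simp only [pow_one]
    have e3 : D^2 * E * ((1-x)^2 * (1 - 2 * x)) = 1 := by
      have : D^2 * E * ((1-x)^2 * (1 - 2 * x)) = (D * (1-x))^2 * (E * (1 - 2 * x)) := by ring
      rw [this, hD, hE]; ring
    have e4 : C * ((1 - x)^2 - x * C) * g * ((1-x)^2 * (1 - 2 * x)) =
      (2 * C - 1 - x * C) * ((1-x)^2 * (1 - 2 * x)) + x^2 := by
      linear_combination ((1-x)^2 * (1 - 2 * x)) * hg2 + x^2 * e3
    rw [hq]
    linear_combination x^2 * e4 + x * ((1-x)^2 * (1 - 2 * x)) * hC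

def ins (p : ℕ → ℕ) (i n : ℕ) : ℕ → ℕ :=
  fun j => if j < i then p j else if j = i then n else p (j - 1)

def good1 (p : ℕ → ℕ) (i : ℕ) : Prop :=
  ∀ x y z, x < y → y < z → z < i → ¬ (p y < p x ∧ p x < p z) ∧ ¬ (p z < p x ∧ p x < p y)

def good2 (n : ℕ) (p : ℕ → ℕ) (i : ℕ) : Prop :=
  ∀ x y z, i ≤ x → x < y → y < z → z < n → ¬ (p x < p y ∧ p y < p z)

lemma ins_lt {p : ℕ → ℕ} {i n j : ℕ} (h : j < i) : ins p i n j = p j := by simp [ins, h]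
lemma ins_eq {p : ℕ → ℕ} {i n : ℕ} : ins p i n i = n := by simp [ins]
lemma ins_gt {p : ℕ → ℕ} {i n j : ℕ} (h : i ≤ j) : ins p i n (j+1) = p j := by
  simp only [ins]; rw [if_neg (by omega), if_neg (by omega)]; simp

lemma good1.mono {p : ℕ → ℕ} {i j : ℕ} (h : good1 p i) (hj : j ≤ i) : good1 p j :=
  fun x y z hx hy hz => h x y z hx hy (by omega)

lemma good2.mono {n : ℕ} {p : ℕ → ℕ} {i j : ℕ} (h : good2 n p i) (hj : i ≤ j) : good2 n p j :=
  fun x y z hi hx hy hz => h x y z (by omega) hx hy hz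

/-- index lifting -/
def up (i x : ℕ) : ℕ := if x < i then x else x + 1

lemma ins_up (p : ℕ → ℕ) (i n x : ℕ) : ins p i n (up i x) = p x := by
  unfold up; split_ifs with h
  · exact ins_lt h
  · exact ins_gt (by omega)

lemma up_cases (i y : ℕ) : i = y ∨ ∃ x, y = up i x := by
  rcases lt_trichotomy y i with h | h | h
  · exact Or.inr ⟨y, by simp [up, h]⟩
  · exact Or.inl h.symm
  · exact Or.inr ⟨y - 1, by unfold up; rw [if_neg (by omega)]; omega⟩

lemma up_lt {i x y : ℕ} : up i x < up i y ↔ x < y := by unfold up; split_ifs <;> omega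
lemma up_lt_i {i x : ℕ} : up i x < i ↔ x < i := by unfold up; split_ifs <;> omega
lemma i_lt_up {i x : ℕ} : i < up i x ↔ i ≤ x := by unfold up; split_ifs <;> omega
lemma up_lt_c {i x c : ℕ} (h : i ≤ c) : up i x < c + 1 ↔ x < c := by unfold up; split_ifs <;> omega
lemma le_up {i x c : ℕ} (h : c ≤ i) : c ≤ up i x ↔ c ≤ x := by unfold up; split_ifs <;> omega

lemma good1_ins_le {p : ℕ → ℕ} {i n c : ℕ} (hc : c ≤ i) : good1 (ins p i n) c ↔ good1 p c := by
  constructor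
  · intro h x y z hx hy hz
    have := h x y z hx hy hz
    rwa [ins_lt (by omega), ins_lt (by omega), ins_lt (by omega)] at this
  · intro h x y z hx hy hz
    rw [ins_lt (by omega), ins_lt (by omega), ins_lt (by omega)]
    exact h x y z hx hy hz

lemma good1_ins_gt {p : ℕ → ℕ} {i n c : ℕ} (hc : i ≤ c) (hcn : c ≤ n) (hb : ∀ j < n, p j < n) :
    good1 (ins p i n) (c+1) ↔ good1 p c ∧ (∀ x y, x < y → y < i → p x ≤ p y) ∧
      (∀ x y, x < i → i ≤ y → y < c → p x ≤ p y) := by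
  constructor
  · intro h
    refine ⟨?_, ?_, ?_⟩
    · intro x y z hx hy hz
      have := h (up i x) (up i y) (up i z) (up_lt.2 hx) (up_lt.2 hy) ((up_lt_c hc).2 hz)
      simpa only [ins_up] using this
    · intro x y hx hy
      have := (h x y i hx hy (by omega)).1
      rw [ins_lt hy, ins_lt (by omega), ins_eq] at this
      have := hb x (by omega)
      omega
    · intro x y hx hy hyc
      have := (h x i (y+1) hx (by omega) (by omega)).2
      rw [ins_lt hx, ins_gt hy, ins_eq] at this
      have := hb x (by omega)
      omega
  · rintro ⟨h1, h2, h3⟩ x y z hx hy hz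
    rcases up_cases i x with rfl | ⟨x, rfl⟩ <;> rcases up_cases i y with rfl | ⟨y, rfl⟩ <;>
      rcases up_cases i z with rfl | ⟨z, rfl⟩ <;>
      simp only [up_lt, up_lt_i, i_lt_up, up_lt_c hc, ins_up, ins_eq, lt_self_iff_false] at *
    all_goals first
      | exact h1 x y z hx hy hz
      | (have := fun j (hj : j < c) => hb j (by omega); grind)

lemma good2_ins_le {p : ℕ → ℕ} {i n c : ℕ} (hc : c ≤ i) (hcn : i ≤ n) (hb : ∀ j < n, p j < n) :
    good2 (n+1) (ins p i n) c ↔ good2 n p c ∧ (∀ x y, c ≤ x → x < y → y < i → p y ≤ p x) := by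
  constructor
  · intro h
    refine ⟨?_, ?_⟩
    · intro x y z hi hx hy hz
      have := h (up i x) (up i y) (up i z) ((le_up hc).2 hi) (up_lt.2 hx) (up_lt.2 hy)
        ((up_lt_c hcn).2 hz)
      simpa only [ins_up] using this
    · intro x y hc hx hy
      have := h x y i hc hx hy (by omega)
      rw [ins_lt hy, ins_lt (by omega), ins_eq] at this
      have := hb y (by omega)
      omega
  · rintro ⟨h1, h2⟩ x y z hi hx hy hz
    rcases up_cases i x with rfl | ⟨x, rfl⟩ <;> rcases up_cases i y with rfl | ⟨y, rfl⟩ <;>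
      rcases up_cases i z with rfl | ⟨z, rfl⟩ <;>
      simp only [up_lt, up_lt_i, i_lt_up, up_lt_c hcn, le_up hc, ins_up, ins_eq, lt_self_iff_false] at *
    all_goals first
      | exact h1 x y z hi hx hy hz
      | (have := fun j (hj : j < n) => hb j (by omega); grind)

structure Sites (n : ℕ) (p : ℕ → ℕ) (a b : ℕ) : Prop where
  bd : ∀ j < n, p j < n
  ab : a ≤ b
  bn : b ≤ n
  g1 : good1 p b
  m1 : b < n → ¬ good1 p (b+1)
  g2 : good2 n p a
  m2 : 0 < a → ¬ good2 n p (a-1)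

lemma ins_bd {n : ℕ} {p : ℕ → ℕ} {i : ℕ} (hi : i ≤ n) (h : ∀ j < n, p j < n) :
    ∀ j < n + 1, ins p i n j < n + 1 := by
  intro j hj
  rcases up_cases i j with rfl | ⟨x, rfl⟩
  · rw [ins_eq]; omega
  · rw [ins_up]; have := h x ((up_lt_c hi).1 hj); omega

structure StA (n : ℕ) (p : ℕ → ℕ) (a k : ℕ) : Prop where
  st : Sites n p a (a+k)
  lo : ∀ x y, x < a → x < y → y < a + k → p x < p y
  hi : ∀ x y, a ≤ x → x < y → y < a + k → p y < p x

structure StB (n : ℕ) (p : ℕ → ℕ) (a s t : ℕ) : Prop where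
  st : Sites n p a (a+s+t+2)
  lo : ∀ x y, x < a → x < y → y < a+s+t+2 → p x < p y
  hi : ∀ x y, a ≤ x → x < a + s → x < y → y < a+s+t+2 → p y < p x
  md : ∀ x y, x = a + s → x < y → y < a+s+t+2 → p x < p y
  h2 : ∀ x y, a + s < x → x < y → y < a+s+t+2 → p y < p x

structure StD (n : ℕ) (p : ℕ → ℕ) (a k : ℕ) : Prop where
  st : Sites n p a (a+k)
  iv : ∃ x y, x < y ∧ y < a ∧ p y < p x
  hi : ∀ x y, a ≤ x → x < y → y < a + k → p y < p x

/-- Insert after an inversion: `b' = i`. -/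
lemma Sites.cut {n : ℕ} {p : ℕ → ℕ} {a b a' i : ℕ} (h : Sites n p a b) (h0 : a ≤ a') (h1 : a' ≤ i) (h2 : i ≤ b)
    (iv : ∃ x y, x < y ∧ y < i ∧ p y < p x)
    (dec : ∀ x y, a' ≤ x → x < y → y < i → p y < p x)
    (asc : a' = a ∨ (∃ x y, a' ≤ x + 1 ∧ x < y ∧ y < i ∧ p x < p y)) :
    Sites (n+1) (ins p i n) a' i := by
  have hbn := h.bn
  refine ⟨ins_bd (by omega) h.bd, h1, by omega, (good1_ins_le le_rfl).2 (h.g1.mono h2), ?_, ?_, ?_⟩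
  · intro _ hg
    rw [good1_ins_gt le_rfl (by omega) h.bd] at hg
    obtain ⟨x, y, hxy, hy, hp⟩ := iv
    have := hg.2.1 x y hxy hy
    omega
  · rw [good2_ins_le h1 (by omega) h.bd]
    exact ⟨h.g2.mono h0, fun x y hx hxy hy => (dec x y hx hxy hy).le⟩
  · intro h0' hg
    rw [good2_ins_le (by omega) (by omega) h.bd] at hg
    rcases asc with rfl | ⟨x, y, hx, hxy, hy, hp⟩
    · exact h.m2 h0' hg.1
    · have := hg.2 x y (by omega) hxy hy
      omega

/-- Insert after an increasing prefix: `b' = c + 1`. -/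
lemma Sites.ext {n : ℕ} {p : ℕ → ℕ} {a b a' i c : ℕ} (h : Sites n p a b) (h0 : a ≤ a') (h1 : a' ≤ i) (h2 : i ≤ c)
    (hcb : c ≤ b)
    (inc : ∀ x y, x < i → x < y → y < c → p x < p y)
    (mx : c = b ∨ (∃ x, x < i ∧ p c < p x))
    (dec : ∀ x y, a' ≤ x → x < y → y < i → p y < p x)
    (asc : a' = a ∨ (∃ x y, a' ≤ x + 1 ∧ x < y ∧ y < i ∧ p x < p y)) :
    Sites (n+1) (ins p i n) a' (c+1) := by
  have hbn := h.bn
  refine ⟨ins_bd (by omega) h.bd, by omega, by omega, ?_, ?_, ?_, ?_⟩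
  · rw [good1_ins_gt h2 (by omega) h.bd]
    exact ⟨h.g1.mono hcb, fun x y hxy hy => (inc x y (by omega) hxy (by omega)).le,
      fun x y hx hy hyc => (inc x y hx (by omega) hyc).le⟩
  · intro hc hg
    rw [good1_ins_gt (by omega) (by omega) h.bd] at hg
    rcases mx with rfl | ⟨x, hx, hp⟩
    · exact h.m1 (by omega) hg.1
    · have := hg.2.2 x c hx (by omega) (by omega)
      omega
  · rw [good2_ins_le h1 (by omega) h.bd]
    exact ⟨h.g2.mono h0, fun x y hx hxy hy => (dec x y hx hxy hy).le⟩
  · intro h0' hg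
    rw [good2_ins_le (by omega) (by omega) h.bd] at hg
    rcases asc with rfl | ⟨x, y, hx, hxy, hy, hp⟩
    · exact h.m2 h0' hg.1
    · have := hg.2 x y (by omega) hxy hy
      omega

lemma ins_two {p : ℕ → ℕ} {i n : ℕ} (x y : ℕ) (hxy : x < y) (Q : ℕ → ℕ → Prop)
    (h1 : y < i → Q (p x) (p y)) (h2 : y = i → Q (p x) n) (h3 : x < i → i < y → Q (p x) (p (y-1)))
    (h4 : x = i → Q n (p (y-1))) (h5 : i < x → Q (p (x-1)) (p (y-1))) :
    Q (ins p i n x) (ins p i n y) := by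
  simp only [ins]
  split_ifs
  all_goals first | (exfalso; omega) | (apply h1; omega) | (apply h2; omega) | (apply h3 <;> omega) | (apply h4; omega) | (apply h5; omega)

lemma StA.a0 {n p a k} (h : StA n p a k) : StA (n+1) (ins p a n) a (k+1) := by
  obtain ⟨st, lo, hi⟩ := h
  have hbn := st.bn
  have hbd := st.bd
  refine ⟨st.ext le_rfl le_rfl (Nat.le_add_right _ _) le_rfl lo (by simp) (by intros; omega) (by simp), ?_, ?_⟩
  · intros
    refine ins_two _ _ (by omega) (fun u v => u < v) ?_ ?_ ?_ ?_ ?_ <;> intros <;>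
      first | omega | exact hbd _ (by omega) | exact lo _ _ (by omega) (by omega) (by omega) | exact hi _ _ (by omega) (by omega) (by omega)
  · intros
    refine ins_two _ _ (by omega) (fun u v => v < u) ?_ ?_ ?_ ?_ ?_ <;> intros <;>
      first | omega | exact hbd _ (by omega) | exact lo _ _ (by omega) (by omega) (by omega) | exact hi _ _ (by omega) (by omega) (by omega)

lemma StA.a1 {n p a k} (h : StA n p a k) (hk : 1 ≤ k) : StB (n+1) (ins p (a+1) n) a 0 0 := by
  obtain ⟨st, lo, hi⟩ := h
  have hbn := st.bn
  have hbd := st.bd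
  refine ⟨st.ext (c := a+1) le_rfl (by omega) (by omega) (by omega) (by intros; first | omega | exact hbd _ (by omega) | exact lo _ _ (by omega) (by omega) (by omega) | exact hi _ _ (by omega) (by omega) (by omega)) ?_ (by intros; omega) (by simp),
    ?_, ?_, ?_, ?_⟩
  · by_cases hk1 : k = 1
    · left; omega
    · right; exact ⟨a, by omega, hi _ _ (by omega) (by omega) (by omega)⟩
  · intros
    refine ins_two _ _ (by omega) (fun u v => u < v) ?_ ?_ ?_ ?_ ?_ <;> intros <;>
      first | omega | exact hbd _ (by omega) | exact lo _ _ (by omega) (by omega) (by omega) | exact hi _ _ (by omega) (by omega) (by omega)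
  · intros
    refine ins_two _ _ (by omega) (fun u v => v < u) ?_ ?_ ?_ ?_ ?_ <;> intros <;>
      first | omega | exact hbd _ (by omega) | exact lo _ _ (by omega) (by omega) (by omega) | exact hi _ _ (by omega) (by omega) (by omega)
  · intros
    refine ins_two _ _ (by omega) (fun u v => u < v) ?_ ?_ ?_ ?_ ?_ <;> intros <;>
      first | omega | exact hbd _ (by omega) | exact lo _ _ (by omega) (by omega) (by omega) | exact hi _ _ (by omega) (by omega) (by omega)
  · intros
    refine ins_two _ _ (by omega) (fun u v => v < u) ?_ ?_ ?_ ?_ ?_ <;> intros <;>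
      first | omega | exact hbd _ (by omega) | exact lo _ _ (by omega) (by omega) (by omega) | exact hi _ _ (by omega) (by omega) (by omega)

lemma StA.aj {n p a k j} (h : StA n p a k) (hj : 2 ≤ j) (hk : j ≤ k) : StA (n+1) (ins p (a+j) n) a j := by
  obtain ⟨st, lo, hi⟩ := h
  have hbn := st.bn
  have hbd := st.bd
  refine ⟨st.cut le_rfl (by omega) (by omega) ⟨a, a+1, by omega, by omega, hi _ _ (by omega) (by omega) (by omega)⟩ (by intros; first | omega | exact hbd _ (by omega) | exact lo _ _ (by omega) (by omega) (by omega) | exact hi _ _ (by omega) (by omega) (by omega)) (by simp), ?_, ?_⟩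
  · intros
    refine ins_two _ _ (by omega) (fun u v => u < v) ?_ ?_ ?_ ?_ ?_ <;> intros <;>
      first | omega | exact hbd _ (by omega) | exact lo _ _ (by omega) (by omega) (by omega) | exact hi _ _ (by omega) (by omega) (by omega)
  · intros
    refine ins_two _ _ (by omega) (fun u v => v < u) ?_ ?_ ?_ ?_ ?_ <;> intros <;>
      first | omega | exact hbd _ (by omega) | exact lo _ _ (by omega) (by omega) (by omega) | exact hi _ _ (by omega) (by omega) (by omega)

lemma StB.b0 {n p a s t} (h : StB n p a s t) : StB (n+1) (ins p a n) a (s+1) t := by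
  obtain ⟨st, lo, hi, md, h2⟩ := h
  have hbn := st.bn
  have hbd := st.bd
  have key := st.ext (i := a) le_rfl le_rfl (by omega) le_rfl lo (by simp) (by intros; omega) (by simp)
  rw [show a + s + t + 2 + 1 = a + (s+1) + t + 2 by omega] at key
  refine ⟨key, ?_, ?_, ?_, ?_⟩
  · intros
    refine ins_two _ _ (by omega) (fun u v => u < v) ?_ ?_ ?_ ?_ ?_ <;> intros <;>
      first | omega | exact hbd _ (by omega) | exact lo _ _ (by omega) (by omega) (by omega) | exact hi _ _ (by omega) (by omega) (by omega) (by omega) | exact md _ _ (by omega) (by omega) (by omega) | exact h2 _ _ (by omega) (by omega) (by omega)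
  · intros
    refine ins_two _ _ (by omega) (fun u v => v < u) ?_ ?_ ?_ ?_ ?_ <;> intros <;>
      first | omega | exact hbd _ (by omega) | exact lo _ _ (by omega) (by omega) (by omega) | exact hi _ _ (by omega) (by omega) (by omega) (by omega) | exact md _ _ (by omega) (by omega) (by omega) | exact h2 _ _ (by omega) (by omega) (by omega)
  · intros
    refine ins_two _ _ (by omega) (fun u v => u < v) ?_ ?_ ?_ ?_ ?_ <;> intros <;>
      first | omega | exact hbd _ (by omega) | exact lo _ _ (by omega) (by omega) (by omega) | exact hi _ _ (by omega) (by omega) (by omega) (by omega) | exact md _ _ (by omega) (by omega) (by omega) | exact h2 _ _ (by omega) (by omega) (by omega)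
  · intros
    refine ins_two _ _ (by omega) (fun u v => v < u) ?_ ?_ ?_ ?_ ?_ <;> intros <;>
      first | omega | exact hbd _ (by omega) | exact lo _ _ (by omega) (by omega) (by omega) | exact hi _ _ (by omega) (by omega) (by omega) (by omega) | exact md _ _ (by omega) (by omega) (by omega) | exact h2 _ _ (by omega) (by omega) (by omega)

lemma StB.b1 {n p a s t} (h : StB n p a (s+1) t) : StB (n+1) (ins p (a+1) n) a 0 0 := by
  obtain ⟨st, lo, hi, md, h2⟩ := h
  have hbn := st.bn
  have hbd := st.bd
  refine ⟨st.ext (c := a+1) le_rfl (by omega) (by omega) (by omega) (by intros; first | omega | exact hbd _ (by omega) | exact lo _ _ (by omega) (by omega) (by omega) | exact hi _ _ (by omega) (by omega) (by omega) (by omega) | exact md _ _ (by omega) (by omega) (by omega) | exact h2 _ _ (by omega) (by omega) (by omega))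
    (Or.inr ⟨a, by omega, hi _ _ (by omega) (by omega) (by omega) (by omega)⟩) (by intros; omega) (by simp),
    ?_, ?_, ?_, ?_⟩
  · intros
    refine ins_two _ _ (by omega) (fun u v => u < v) ?_ ?_ ?_ ?_ ?_ <;> intros <;>
      first | omega | exact hbd _ (by omega) | exact lo _ _ (by omega) (by omega) (by omega) | exact hi _ _ (by omega) (by omega) (by omega) (by omega) | exact md _ _ (by omega) (by omega) (by omega) | exact h2 _ _ (by omega) (by omega) (by omega)
  · intros
    refine ins_two _ _ (by omega) (fun u v => v < u) ?_ ?_ ?_ ?_ ?_ <;> intros <;>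
      first | omega | exact hbd _ (by omega) | exact lo _ _ (by omega) (by omega) (by omega) | exact hi _ _ (by omega) (by omega) (by omega) (by omega) | exact md _ _ (by omega) (by omega) (by omega) | exact h2 _ _ (by omega) (by omega) (by omega)
  · intros
    refine ins_two _ _ (by omega) (fun u v => u < v) ?_ ?_ ?_ ?_ ?_ <;> intros <;>
      first | omega | exact hbd _ (by omega) | exact lo _ _ (by omega) (by omega) (by omega) | exact hi _ _ (by omega) (by omega) (by omega) (by omega) | exact md _ _ (by omega) (by omega) (by omega) | exact h2 _ _ (by omega) (by omega) (by omega)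
  · intros
    refine ins_two _ _ (by omega) (fun u v => v < u) ?_ ?_ ?_ ?_ ?_ <;> intros <;>
      first | omega | exact hbd _ (by omega) | exact lo _ _ (by omega) (by omega) (by omega) | exact hi _ _ (by omega) (by omega) (by omega) (by omega) | exact md _ _ (by omega) (by omega) (by omega) | exact h2 _ _ (by omega) (by omega) (by omega)

lemma StB.bj {n p a s t j} (h : StB n p a s t) (hj : 2 ≤ j) (hk : j ≤ s + 1) :
    StA (n+1) (ins p (a+j) n) a j := by
  obtain ⟨st, lo, hi, md, h2⟩ := h
  have hbn := st.bn
  have hbd := st.bd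
  refine ⟨st.cut le_rfl (by omega) (by omega)
    ⟨a, a+1, by omega, by omega, hi _ _ (by omega) (by omega) (by omega) (by omega)⟩ (by intros; first | omega | exact hbd _ (by omega) | exact lo _ _ (by omega) (by omega) (by omega) | exact hi _ _ (by omega) (by omega) (by omega) (by omega) | exact md _ _ (by omega) (by omega) (by omega) | exact h2 _ _ (by omega) (by omega) (by omega)) (by simp), ?_, ?_⟩
  · intros
    refine ins_two _ _ (by omega) (fun u v => u < v) ?_ ?_ ?_ ?_ ?_ <;> intros <;>
      first | omega | exact hbd _ (by omega) | exact lo _ _ (by omega) (by omega) (by omega) | exact hi _ _ (by omega) (by omega) (by omega) (by omega) | exact md _ _ (by omega) (by omega) (by omega) | exact h2 _ _ (by omega) (by omega) (by omega)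
  · intros
    refine ins_two _ _ (by omega) (fun u v => v < u) ?_ ?_ ?_ ?_ ?_ <;> intros <;>
      first | omega | exact hbd _ (by omega) | exact lo _ _ (by omega) (by omega) (by omega) | exact hi _ _ (by omega) (by omega) (by omega) (by omega) | exact md _ _ (by omega) (by omega) (by omega) | exact h2 _ _ (by omega) (by omega) (by omega)

lemma StB.bd {n p a s t j} (h : StB n p a (s+1) t) (hj : j ≤ t) :
    StD (n+1) (ins p (a+s+j+3) n) (a+s+2) (j+1) := by
  obtain ⟨st, lo, hi, md, h2⟩ := h
  have hbn := st.bn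
  have hbd := st.bd
  have hi' := hi a (a+s+1) (by omega) (by omega) (by omega) (by omega)
  have key := st.cut (i := a+s+j+3) (a' := a+s+2) (by omega) (by omega) (by omega)
    ⟨a, a+s+1, by omega, by omega, hi'⟩ (by intros; first | omega | exact hbd _ (by omega) | exact lo _ _ (by omega) (by omega) (by omega) | exact hi _ _ (by omega) (by omega) (by omega) (by omega) | exact md _ _ (by omega) (by omega) (by omega) | exact h2 _ _ (by omega) (by omega) (by omega))
    (Or.inr ⟨a+(s+1), a+(s+1)+1, by omega, by omega, by omega, md _ _ rfl (by omega) (by omega)⟩)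
  rw [show a+s+j+3 = a+s+2+(j+1) by omega] at *
  refine ⟨key, ⟨a, a+s+1, by omega, by omega, ?_⟩, ?_⟩
  · rwa [ins_lt (by omega), ins_lt (by omega)]
  · intros
    refine ins_two _ _ (by omega) (fun u v => v < u) ?_ ?_ ?_ ?_ ?_ <;> intros <;>
      first | omega | exact hbd _ (by omega) | exact lo _ _ (by omega) (by omega) (by omega) | exact hi _ _ (by omega) (by omega) (by omega) (by omega) | exact md _ _ (by omega) (by omega) (by omega) | exact h2 _ _ (by omega) (by omega) (by omega)

lemma StB.z1 {n p a t} (h : StB n p a 0 t) : StB (n+1) (ins p (a+1) n) a 0 (t+1) := by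
  obtain ⟨st, lo, hi, md, h2⟩ := h
  have hbn := st.bn
  have lo' : ∀ x y, x < a + 1 → x < y → y < a + t + 2 → p x < p y := by
    intro x y hx hy ht
    rcases Nat.lt_or_ge x a with h | h
    · exact lo _ _ (by omega) (by omega) (by omega)
    · exact md _ _ (by omega) (by omega) (by omega)
  have hbd := st.bd
  have key := st.ext (i := a+1) le_rfl (by omega) (by omega) le_rfl (by intros; first | omega | exact hbd _ (by omega) | exact lo _ _ (by omega) (by omega) (by omega) | exact hi _ _ (by omega) (by omega) (by omega) (by omega) | exact md _ _ (by omega) (by omega) (by omega) | exact h2 _ _ (by omega) (by omega) (by omega) | exact lo' _ _ (by omega) (by omega) (by omega)) (by simp) (by intros; omega) (by simp)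
  rw [show a + 0 + t + 2 + 1 = a + 0 + (t+1) + 2 by omega] at key
  refine ⟨key, ?_, ?_, ?_, ?_⟩
  · intros
    refine ins_two _ _ (by omega) (fun u v => u < v) ?_ ?_ ?_ ?_ ?_ <;> intros <;>
      first | omega | exact hbd _ (by omega) | exact lo _ _ (by omega) (by omega) (by omega) | exact hi _ _ (by omega) (by omega) (by omega) (by omega) | exact md _ _ (by omega) (by omega) (by omega) | exact h2 _ _ (by omega) (by omega) (by omega) | exact lo' _ _ (by omega) (by omega) (by omega)
  · intros
    refine ins_two _ _ (by omega) (fun u v => v < u) ?_ ?_ ?_ ?_ ?_ <;> intros <;>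
      first | omega | exact hbd _ (by omega) | exact lo _ _ (by omega) (by omega) (by omega) | exact hi _ _ (by omega) (by omega) (by omega) (by omega) | exact md _ _ (by omega) (by omega) (by omega) | exact h2 _ _ (by omega) (by omega) (by omega) | exact lo' _ _ (by omega) (by omega) (by omega)
  · intros
    refine ins_two _ _ (by omega) (fun u v => u < v) ?_ ?_ ?_ ?_ ?_ <;> intros <;>
      first | omega | exact hbd _ (by omega) | exact lo _ _ (by omega) (by omega) (by omega) | exact hi _ _ (by omega) (by omega) (by omega) (by omega) | exact md _ _ (by omega) (by omega) (by omega) | exact h2 _ _ (by omega) (by omega) (by omega) | exact lo' _ _ (by omega) (by omega) (by omega)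
  · intros
    refine ins_two _ _ (by omega) (fun u v => v < u) ?_ ?_ ?_ ?_ ?_ <;> intros <;>
      first | omega | exact hbd _ (by omega) | exact lo _ _ (by omega) (by omega) (by omega) | exact hi _ _ (by omega) (by omega) (by omega) (by omega) | exact md _ _ (by omega) (by omega) (by omega) | exact h2 _ _ (by omega) (by omega) (by omega) | exact lo' _ _ (by omega) (by omega) (by omega)

lemma StB.z2 {n p a t} (h : StB n p a 0 t) : StB (n+1) (ins p (a+2) n) (a+1) 0 0 := by
  obtain ⟨st, lo, hi, md, h2⟩ := h
  have hbn := st.bn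
  have lo' : ∀ x y, x < a + 1 → x < y → y < a + t + 2 → p x < p y := by
    intro x y hx hy ht
    rcases Nat.lt_or_ge x a with h | h
    · exact lo _ _ (by omega) (by omega) (by omega)
    · exact md _ _ (by omega) (by omega) (by omega)
  have hbd := st.bd
  have md1 := md a (a+1) rfl (by omega) (by omega)
  refine ⟨st.ext (c := a+2) (by omega) (by omega) (by omega) (by omega) (by intros; first | omega | exact hbd _ (by omega) | exact lo _ _ (by omega) (by omega) (by omega) | exact hi _ _ (by omega) (by omega) (by omega) (by omega) | exact md _ _ (by omega) (by omega) (by omega) | exact h2 _ _ (by omega) (by omega) (by omega) | exact lo' _ _ (by omega) (by omega) (by omega)) ?_ (by intros; omega)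
    (Or.inr ⟨a, a+1, by omega, by omega, by omega, md1⟩),
    ?_, ?_, ?_, ?_⟩
  · by_cases hk1 : t = 0
    · left; omega
    · right; exact ⟨a+1, by omega, h2 _ _ (by omega) (by omega) (by omega)⟩
  · intros
    refine ins_two _ _ (by omega) (fun u v => u < v) ?_ ?_ ?_ ?_ ?_ <;> intros <;>
      first | omega | exact hbd _ (by omega) | exact lo _ _ (by omega) (by omega) (by omega) | exact hi _ _ (by omega) (by omega) (by omega) (by omega) | exact md _ _ (by omega) (by omega) (by omega) | exact h2 _ _ (by omega) (by omega) (by omega) | exact lo' _ _ (by omega) (by omega) (by omega)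
  · intros
    refine ins_two _ _ (by omega) (fun u v => v < u) ?_ ?_ ?_ ?_ ?_ <;> intros <;>
      first | omega | exact hbd _ (by omega) | exact lo _ _ (by omega) (by omega) (by omega) | exact hi _ _ (by omega) (by omega) (by omega) (by omega) | exact md _ _ (by omega) (by omega) (by omega) | exact h2 _ _ (by omega) (by omega) (by omega) | exact lo' _ _ (by omega) (by omega) (by omega)
  · intros
    refine ins_two _ _ (by omega) (fun u v => u < v) ?_ ?_ ?_ ?_ ?_ <;> intros <;>
      first | omega | exact hbd _ (by omega) | exact lo _ _ (by omega) (by omega) (by omega) | exact hi _ _ (by omega) (by omega) (by omega) (by omega) | exact md _ _ (by omega) (by omega) (by omega) | exact h2 _ _ (by omega) (by omega) (by omega) | exact lo' _ _ (by omega) (by omega) (by omega)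
  · intros
    refine ins_two _ _ (by omega) (fun u v => v < u) ?_ ?_ ?_ ?_ ?_ <;> intros <;>
      first | omega | exact hbd _ (by omega) | exact lo _ _ (by omega) (by omega) (by omega) | exact hi _ _ (by omega) (by omega) (by omega) (by omega) | exact md _ _ (by omega) (by omega) (by omega) | exact h2 _ _ (by omega) (by omega) (by omega) | exact lo' _ _ (by omega) (by omega) (by omega)

lemma StB.zj {n p a t j} (h : StB n p a 0 t) (hj : j < t) :
    StA (n+1) (ins p (a+j+3) n) (a+1) (j+2) := by
  obtain ⟨st, lo, hi, md, h2⟩ := h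
  have hbn := st.bn
  have lo' : ∀ x y, x < a + 1 → x < y → y < a + t + 2 → p x < p y := by
    intro x y hx hy ht
    rcases Nat.lt_or_ge x a with h | h
    · exact lo _ _ (by omega) (by omega) (by omega)
    · exact md _ _ (by omega) (by omega) (by omega)
  have hbd := st.bd
  have md1 := md a (a+1) rfl (by omega) (by omega)
  have key := st.cut (i := a+j+3) (a' := a+1) (by omega) (by omega) (by omega)
    ⟨a+1, a+2, by omega, by omega, h2 _ _ (by omega) (by omega) (by omega)⟩ (by intros; first | omega | exact hbd _ (by omega) | exact lo _ _ (by omega) (by omega) (by omega) | exact hi _ _ (by omega) (by omega) (by omega) (by omega) | exact md _ _ (by omega) (by omega) (by omega) | exact h2 _ _ (by omega) (by omega) (by omega) | exact lo' _ _ (by omega) (by omega) (by omega))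
    (Or.inr ⟨a, a+1, by omega, by omega, by omega, md1⟩)
  rw [show a+j+3 = a+1+(j+2) by omega] at *
  refine ⟨key, ?_, ?_⟩
  · intros
    refine ins_two _ _ (by omega) (fun u v => u < v) ?_ ?_ ?_ ?_ ?_ <;> intros <;>
      first | omega | exact hbd _ (by omega) | exact lo _ _ (by omega) (by omega) (by omega) | exact hi _ _ (by omega) (by omega) (by omega) (by omega) | exact md _ _ (by omega) (by omega) (by omega) | exact h2 _ _ (by omega) (by omega) (by omega) | exact lo' _ _ (by omega) (by omega) (by omega)
  · intros
    refine ins_two _ _ (by omega) (fun u v => v < u) ?_ ?_ ?_ ?_ ?_ <;> intros <;>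
      first | omega | exact hbd _ (by omega) | exact lo _ _ (by omega) (by omega) (by omega) | exact hi _ _ (by omega) (by omega) (by omega) (by omega) | exact md _ _ (by omega) (by omega) (by omega) | exact h2 _ _ (by omega) (by omega) (by omega) | exact lo' _ _ (by omega) (by omega) (by omega)

lemma StD.dj {n p a k j} (h : StD n p a k) (hj : j ≤ k) : StD (n+1) (ins p (a+j) n) a j := by
  obtain ⟨st, ⟨x0, y0, hxy, hy, hp⟩, hi⟩ := h
  have hbn := st.bn
  have hbd := st.bd
  refine ⟨st.cut le_rfl (by omega) (by omega) ⟨x0, y0, hxy, by omega, hp⟩ (by intros; first | omega | exact hbd _ (by omega) | exact hi _ _ (by omega) (by omega) (by omega)) (by simp),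
    ⟨x0, y0, hxy, hy, ?_⟩, ?_⟩
  · rwa [ins_lt (by omega), ins_lt (by omega)]
  · intros
    refine ins_two _ _ (by omega) (fun u v => v < u) ?_ ?_ ?_ ?_ ?_ <;> intros <;>
      first | omega | exact hbd _ (by omega) | exact hi _ _ (by omega) (by omega) (by omega)

open Classical in
noncomputable def NN : ℕ → ℕ → (ℕ → ℕ) → ℚ
  | 0, _, _ => 1
  | m+1, n, p => ∑ i ∈ Finset.range (n+1), if good1 p i ∧ good2 n p i then NN m (n+1) (ins p i n) else 0

lemma Sites.sum {n p a k} (h : Sites n p a (a+k)) (m : ℕ) :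
    NN (m+1) n p = ∑ j ∈ Finset.range (k+1), NN m (n+1) (ins p (a+j) n) := by
  classical
  have hbn := h.bn
  rw [NN, ← Finset.sum_filter]
  have : (Finset.range (n+1)).filter (fun i => good1 p i ∧ good2 n p i) =
      (Finset.range (k+1)).map (addLeftEmbedding a) := by
    ext i
    simp only [Finset.mem_filter, Finset.mem_range, Finset.mem_map, addLeftEmbedding_apply]
    constructor
    · rintro ⟨hi, h1, h2⟩
      have ha : a ≤ i := by
        by_contra hc
        exact h.m2 (by omega) (h2.mono (by omega))
      have hb : i ≤ a + k := by
        by_contra hc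
        exact h.m1 (by omega) (h1.mono (by omega))
      exact ⟨i - a, by omega, by omega⟩
    · rintro ⟨j, hj, rfl⟩
      exact ⟨by omega, h.g1.mono (by omega), h.g2.mono (by omega)⟩
  rw [this, Finset.sum_map]
  rfl

lemma coeff_step {f g : PowerSeries ℚ} (h : f = 1 + X * g) (m : ℕ) : coeff (m+1) f = coeff m g := by
  rw [h, map_add, coeff_succ_X_mul, coeff_one]; simp

lemma coeff_zero' {f g : PowerSeries ℚ} (h : f = 1 + X * g) : coeff 0 f = 1 := by
  rw [h]; simp

lemma NN_eq (S : Sys X) (m : ℕ) :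
    (∀ n p a k, StA n p a (k+1) → NN m n p = coeff m (S.al (k+1))) ∧
    (∀ n p a s t, StB n p a s t → NN m n p = coeff m (S.be s t)) ∧
    (∀ n p a k, StD n p a k → NN m n p = coeff m (S.de (k+1))) := by
  induction m with
  | zero =>
    refine ⟨?_, ?_, ?_⟩
    · intro n p a k _; rw [coeff_zero' (S.hal k)]; rfl
    · intro n p a s t _
      rcases s with _ | s
      · rw [coeff_zero' (S.hbz t)]; rfl
      · rw [coeff_zero' (S.hbe s t)]; rfl
    · intro n p a k _; rw [coeff_zero' (S.hde k)]; rfl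
  | succ m ih =>
    obtain ⟨ihA, ihB, ihD⟩ := ih
    refine ⟨?_, ?_, ?_⟩
    · intro n p a k h
      rw [coeff_step (S.hal k), h.st.sum, Finset.sum_range_succ', Finset.sum_range_succ']
      simp only [map_add, map_sum]
      rw [show a + (0+1) = a + 1 by omega, show a + 0 = a by omega, ihA _ _ _ _ h.a0, ihB _ _ _ _ _ (h.a1 (by omega)),
        Finset.sum_congr rfl fun j hj => ihA _ _ _ (j+1)
          (h.aj (j := j+1+1) (by omega) (by have := Finset.mem_range.1 hj; omega))]
      ring
    · intro n p a s t h
      rcases s with _ | s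
      · have st := h.st
        rw [show a + 0 + t + 2 = a + (t+2) by omega] at st
        rw [coeff_step (S.hbz t), st.sum, Finset.sum_range_succ', Finset.sum_range_succ',
          Finset.sum_range_succ']
        simp only [map_add, map_sum]
        rw [show a + (0+1+1) = a + 2 by omega, show a + (0+1) = a + 1 by omega,
          show a + 0 = a by omega,
          ihB _ _ _ _ _ h.b0, ihB _ _ _ _ _ h.z1, ihB _ _ _ _ _ h.z2,
          Finset.sum_congr rfl fun j hj => (show NN m (n+1) (ins p (a + (j+1+1+1)) n) = _ from
            ihA _ _ _ (j+1) (h.zj (j := j) (Finset.mem_range.1 hj)))]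
        ring
      · have st := h.st
        rw [show a + (s+1) + t + 2 = a + ((t + 1) + (s + 1) + 1) by omega] at st
        rw [coeff_step (S.hbe s t), st.sum,
          show (t+1) + (s+1) + 1 + 1 = (s + 1 + (t + 1)) + 1 + 1 by omega,
          Finset.sum_range_succ', Finset.sum_range_succ', Finset.sum_range_add]
        simp only [map_add, map_sum]
        rw [show a + (0+1) = a + 1 by omega, show a + 0 = a by omega,
          ihB _ _ _ _ _ h.b0, ihB _ _ _ _ _ h.b1,
          Finset.sum_congr rfl fun j hj => ihA _ _ _ (j+1)
            (h.bj (j := j+1+1) (by omega) (by have := Finset.mem_range.1 hj; omega))]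
        have e : ∀ j ∈ Finset.range (t+1), NN m (n+1) (ins p (a + (s+1+j+1+1)) n) = coeff m (S.de (j+2)) := by
          intro j hj
          rw [show a + (s+1+j+1+1) = a+s+j+3 by omega]
          exact ihD _ _ _ _ (h.bd (by have := Finset.mem_range.1 hj; omega))
        rw [Finset.sum_congr rfl e]
        ring
    · intro n p a k h
      rw [coeff_step (S.hde k), h.st.sum, map_sum]
      exact Finset.sum_congr rfl fun j hj => ihD _ _ _ _ (h.dj (by have := Finset.mem_range.1 hj; omega))

lemma NN_zero (S : Sys X) (n : ℕ) (p : ℕ → ℕ) : NN n 0 p = coeff n (1 + X * S.al 1) := by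
  rcases n with _ | n
  · rw [coeff_zero' rfl]; rfl
  · have h0 : Sites 0 p 0 (0+0) := ⟨by simp, le_rfl, le_rfl, by intro x y z; omega, by simp,
      by intro x y z; omega, by simp⟩
    rw [coeff_step rfl, h0.sum, Finset.sum_range_one]
    refine (NN_eq S n).1 _ _ 0 0 ⟨⟨?_, ?_, ?_, ?_, ?_, ?_, ?_⟩, ?_, ?_⟩
    · intro j hj
      obtain rfl : j = 0 := by omega
      simp [ins]
    · omega
    · omega
    · intro x y z; omega
    · omega
    · intro x y z; omega
    · omega
    · intro x y; omega
    · intro x y; omega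

def full (n : ℕ) (p : ℕ → ℕ) : Prop :=
  ∀ w x y z, w < x → x < y → y < z → z < n →
    ¬ (p x < p w ∧ p w < p y ∧ p y < p z) ∧ ¬ (p y < p w ∧ p w < p x ∧ p x < p z) ∧
    ¬ (p x < p y ∧ p y < p z ∧ p z < p w)

lemma full_ins {n i : ℕ} {p : ℕ → ℕ} (hi : i ≤ n) (hb : ∀ j < n, p j < n) :
    full (n+1) (ins p i n) ↔ full n p ∧ good1 p i ∧ good2 n p i := by
  constructor
  · intro h
    refine ⟨?_, ?_, ?_⟩
    · intro w x y z hw hx hy hz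
      have := h (up i w) (up i x) (up i y) (up i z) (up_lt.2 hw) (up_lt.2 hx) (up_lt.2 hy)
        ((up_lt_c hi).2 hz)
      simpa only [ins_up] using this
    · intro x y z hx hy hz
      have := h x y z i hx hy hz (by omega)
      rw [ins_lt (by omega), ins_lt (by omega), ins_lt (by omega), ins_eq] at this
      have := hb y (by omega)
      have := hb z (by omega)
      omega
    · intro x y z hx hy hz hn
      have := h i (x+1) (y+1) (z+1) (by omega) (by omega) (by omega) (by omega)
      rw [ins_gt (by omega), ins_gt (by omega), ins_gt (by omega), ins_eq] at this
      have := hb z (by omega)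
      omega
  · rintro ⟨h0, h1, h2⟩ w x y z hw hx hy hz
    have hb' : ∀ j, up i j < n + 1 → p j < n := fun j hj => hb j ((up_lt_c hi).1 hj)
    rcases up_cases i w with rfl | ⟨w, rfl⟩ <;> rcases up_cases i x with rfl | ⟨x, rfl⟩ <;>
      rcases up_cases i y with rfl | ⟨y, rfl⟩ <;> rcases up_cases i z with rfl | ⟨z, rfl⟩ <;>
      simp only [up_lt, up_lt_i, i_lt_up, up_lt_c hi, ins_up, ins_eq, lt_self_iff_false] at *
    all_goals first
      | exact h0 w x y z hw hx hy hz
      | (exfalso; omega)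
      | (have := h1 w x y hw hx hy; have := hb w (by omega); have := hb x (by omega); have := hb y (by omega); omega)
      | (have := hb z (by omega); have := h2 x y z (by omega) (by omega) (by omega) (by omega); omega)
      | (have := hb w (by omega); have := hb z (by omega); have := hb y (by omega); omega)
      | (have := hb w (by omega); have := hb z (by omega); have := hb x (by omega); omega)

def extP {n : ℕ} (π : Equiv.Perm (Fin n)) : ℕ → ℕ := fun j => if h : j < n then (π ⟨j, h⟩ : ℕ) else 0

lemma extP_bd {n : ℕ} (π : Equiv.Perm (Fin n)) : ∀ j < n, extP π j < n := by
  intro j hj; simp only [extP, hj, dif_pos]; exact (π _).2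

def insP {n : ℕ} (i : Fin (n+1)) (π : Equiv.Perm (Fin n)) : Equiv.Perm (Fin (n+1)) :=
  ((finSuccEquiv' i).trans (Equiv.optionCongr π)).trans (finSuccEquiv' (Fin.last n)).symm

lemma insP_self {n : ℕ} (i : Fin (n+1)) (π : Equiv.Perm (Fin n)) : insP i π i = Fin.last n := by
  simp [insP]

lemma insP_succAbove {n : ℕ} (i : Fin (n+1)) (π : Equiv.Perm (Fin n)) (j : Fin n) :
    insP i π (i.succAbove j) = (π j).castSucc := by
  simp [insP]

lemma insP_bij (n : ℕ) : Function.Bijective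
    (fun x : Fin (n+1) × Equiv.Perm (Fin n) => insP x.1 x.2) := by
  rw [Fintype.bijective_iff_injective_and_card]
  constructor
  · rintro ⟨i, π⟩ ⟨i', π'⟩ h
    simp only at h
    have hi : i = i' := by
      apply (insP i π).injective
      rw [insP_self, h, insP_self]
    subst hi
    congr 1
    ext j
    have := insP_succAbove i π j
    rw [h, insP_succAbove] at this
    rw [Fin.castSucc_injective _ this]
  · simp [Fintype.card_perm, Nat.factorial_succ]

lemma extP_insP {n : ℕ} (i : Fin (n+1)) (π : Equiv.Perm (Fin n)) :
    extP (insP i π) = ins (extP π) i n := by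
  funext j
  by_cases hj : j < n + 1
  · simp only [extP, hj, dif_pos]
    rcases eq_or_ne (⟨j, hj⟩ : Fin (n+1)) i with h | h
    · rw [h, insP_self, ← h, ins_eq]; simp
    · obtain ⟨k, hk⟩ := Fin.exists_succAbove_eq h
      rw [← hk, insP_succAbove]
      have : j = up i k := by
        have := congrArg Fin.val hk
        simp only [Fin.succAbove, Fin.lt_def] at this
        unfold up
        simp at this
        split_ifs at this ⊢ <;> simp_all
      subst this
      rw [ins_up]
      simp [extP]
  · have := i.2
    simp only [extP, hj, dif_neg, not_false_eq_true, ins]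
    rw [if_neg (by omega), if_neg (by omega), dif_neg (by omega)]

open Classical in
lemma count_shift (m n : ℕ) :
    (∑ π : Equiv.Perm (Fin (n+1)), if full (n+1) (extP π) then NN m (n+1) (extP π) else 0) =
    ∑ π : Equiv.Perm (Fin n), if full n (extP π) then NN (m+1) n (extP π) else 0 := by
  rw [← (insP_bij n).sum_comp, Fintype.sum_prod_type, Finset.sum_comm]
  refine Finset.sum_congr rfl fun π _ => ?_
  rw [NN, Finset.sum_range]
  split_ifs with h
  · refine Finset.sum_congr rfl fun i _ => ?_
    simp only [extP_insP, full_ins (Nat.lt_succ_iff.1 i.2) (extP_bd π), h, true_and]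
  · refine Finset.sum_eq_zero fun i _ => ?_
    simp only [extP_insP, full_ins (Nat.lt_succ_iff.1 i.2) (extP_bd π), h, false_and, if_false]

open Classical in
lemma count_eq (S : Sys X) (n m : ℕ) :
    (∑ π : Equiv.Perm (Fin n), if full n (extP π) then NN m n (extP π) else 0) =
      coeff (m+n) (1 + X * S.al 1) := by
  induction n generalizing m with
  | zero =>
    simp only [full, Nat.not_lt_zero, NN_zero S]
    simp
  | succ n ih => rw [count_shift, ih, show m + 1 + n = m + (n+1) by omega]

lemma card_full (S : Sys X) (n : ℕ) :
    (Nat.card {π : Equiv.Perm (Fin n) // full n (extP π)} : ℚ) = coeff n (1 + X * S.al 1) := by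
  classical
  have := count_eq S n 0
  simp only [NN, zero_add] at this
  rw [← this, Nat.card_eq_fintype_card, Fintype.card_subtype]
  simp

lemma contains_iff {n : ℕ} (π : Equiv.Perm (Fin n)) (σ : Fin 4 → Fin 4) :
    ContainsPattern π σ ↔ ∃ w x y z : Fin n, w < x ∧ x < y ∧ y < z ∧
      ∀ a b : Fin 4, σ a < σ b ↔ π (![w,x,y,z] a) < π (![w,x,y,z] b) := by
  constructor
  · rintro ⟨f, hf⟩
    refine ⟨f 0, f 1, f 2, f 3, by simp, by simp, by simp, ?_⟩
    have : ![f 0, f 1, f 2, f 3] = f := by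
      funext j; fin_cases j <;> rfl
    rw [this]; exact hf
  · rintro ⟨w, x, y, z, hw, hx, hy, h⟩
    have hm : StrictMono ![w,x,y,z] := by
      rw [Fin.strictMono_iff_lt_succ]
      intro i; fin_cases i
      · exact hw
      · exact hx
      · exact hy
    exact ⟨OrderEmbedding.ofStrictMono _ hm, fun a b => h a b⟩

lemma chain1 {n : ℕ} (a b c d : Fin n) :
    (∀ i j : Fin 4, (![0,1,3,2] : Fin 4 → Fin 4) i < (![0,1,3,2] : Fin 4 → Fin 4) j ↔
      ![a,b,c,d] i < ![a,b,c,d] j) ↔ a < b ∧ b < d ∧ d < c := by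
  constructor
  · intro h
    exact ⟨(h 0 1).1 (by decide), (h 1 3).1 (by decide), (h 3 2).1 (by decide)⟩
  · rintro ⟨h1, h2, h3⟩ i j
    fin_cases i <;> fin_cases j <;> simp <;> omega

lemma chain2 {n : ℕ} (a b c d : Fin n) :
    (∀ i j : Fin 4, (![0,3,1,2] : Fin 4 → Fin 4) i < (![0,3,1,2] : Fin 4 → Fin 4) j ↔
      ![a,b,c,d] i < ![a,b,c,d] j) ↔ a < c ∧ c < d ∧ d < b := by
  constructor
  · intro h
    exact ⟨(h 0 2).1 (by decide), (h 2 3).1 (by decide), (h 3 1).1 (by decide)⟩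
  · rintro ⟨h1, h2, h3⟩ i j
    fin_cases i <;> fin_cases j <;> simp <;> omega

lemma chain3 {n : ℕ} (a b c d : Fin n) :
    (∀ i j : Fin 4, (![1,2,3,0] : Fin 4 → Fin 4) i < (![1,2,3,0] : Fin 4 → Fin 4) j ↔
      ![a,b,c,d] i < ![a,b,c,d] j) ↔ d < a ∧ a < b ∧ b < c := by
  constructor
  · intro h
    exact ⟨(h 3 0).1 (by decide), (h 0 1).1 (by decide), (h 1 2).1 (by decide)⟩
  · rintro ⟨h1, h2, h3⟩ i j
    fin_cases i <;> fin_cases j <;> simp <;> omega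

lemma vec_map {n : ℕ} (π : Equiv.Perm (Fin n)) (w x y z : Fin n) (a : Fin 4) :
    π (![w,x,y,z] a) = ![π w, π x, π y, π z] a := by
  fin_cases a <;> rfl

lemma full_conj {n : ℕ} (π : Equiv.Perm (Fin n)) :
    (∀ σ ∈ ({![0,1,3,2], ![0,3,1,2], ![1,2,3,0]} : Set (Fin 4 → Fin 4)), ¬ ContainsPattern π σ) ↔
      full n (extP (Fin.revPerm * π * Fin.revPerm)) := by
  have key : full n (extP (Fin.revPerm * π * Fin.revPerm)) ↔
      ∀ w x y z : Fin n, w < x → x < y → y < z →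
        ¬ (π w < π x ∧ π x < π z ∧ π z < π y) ∧ ¬ (π w < π y ∧ π y < π z ∧ π z < π x) ∧
        ¬ (π z < π w ∧ π w < π x ∧ π x < π y) := by
    have val : ∀ w : Fin n, extP (Fin.revPerm * π * Fin.revPerm) w = (π w.rev).rev := by
      intro w; simp [extP]
    constructor
    · intro h w x y z hw hx hy
      have := h z.rev y.rev x.rev w.rev (Fin.rev_lt_rev.2 hy) (Fin.rev_lt_rev.2 hx)
        (Fin.rev_lt_rev.2 hw) (Fin.rev w).2
      simp only [val, Fin.rev_rev, ← Fin.lt_def, Fin.rev_lt_rev] at this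
      tauto
    · intro h w x y z hw hx hy hz
      have := h (Fin.rev ⟨z, by omega⟩) (Fin.rev ⟨y, by omega⟩) (Fin.rev ⟨x, by omega⟩)
        (Fin.rev ⟨w, by omega⟩) (Fin.rev_lt_rev.2 hy) (Fin.rev_lt_rev.2 hx) (Fin.rev_lt_rev.2 hw)
      have vw := val ⟨w, by omega⟩
      have vx := val ⟨x, by omega⟩
      have vy := val ⟨y, by omega⟩
      have vz := val ⟨z, by omega⟩
      simp only at vw vx vy vz
      simp only [vw, vx, vy, vz, ← Fin.lt_def, Fin.rev_lt_rev]
      tauto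
  rw [key]
  simp only [Set.mem_insert_iff, Set.mem_singleton_iff, forall_eq_or_imp, forall_eq, contains_iff,
    vec_map, chain1, chain2, chain3]
  constructor
  · rintro ⟨h1, h2, h3⟩ w x y z hw hx hy
    exact ⟨fun h => h1 ⟨w, x, y, z, hw, hx, hy, h⟩, fun h => h2 ⟨w, x, y, z, hw, hx, hy, h⟩,
      fun h => h3 ⟨w, x, y, z, hw, hx, hy, h⟩⟩
  · intro h
    refine ⟨?_, ?_, ?_⟩
    · rintro ⟨w, x, y, z, hw, hx, hy, hh⟩; exact (h w x y z hw hx hy).1 hh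
    · rintro ⟨w, x, y, z, hw, hx, hy, hh⟩; exact (h w x y z hw hx hy).2.1 hh
    · rintro ⟨w, x, y, z, hw, hx, hy, hh⟩; exact (h w x y z hw hx hy).2.2 hh

lemma avoider_card (n : ℕ) :
    avoiderCount ({![0,1,3,2], ![0,3,1,2], ![1,2,3,0]} : Set (Fin 4 → Fin 4)) n =
      Nat.card {π : Equiv.Perm (Fin n) // full n (extP π)} := by
  unfold avoiderCount
  refine Nat.card_congr (Equiv.subtypeEquiv
    ((Equiv.mulLeft Fin.revPerm).trans (Equiv.mulRight Fin.revPerm)) ?_)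
  intro π
  exact full_conj π

theorem statement_16 :
    ((X : PowerSeries ℚ) * catalanGF - (X - 1)^2) * (X - 1)^2 * (2*X - 1) * avoiderGF ({![0,1,3,2], ![0,3,1,2], ![1,2,3,0]} : Set (Fin 4 → Fin 4)) =
      X * (X - 1)^2 * (2*X - 1) * catalanGF + (3*X^4 - 7*X^3 + 9*X^2 - 5*X + 1) := by
  obtain ⟨S, hS⟩ := exists_sys
  have : avoiderGF ({![0,1,3,2], ![0,3,1,2], ![1,2,3,0]} : Set (Fin 4 → Fin 4)) = 1 + X * S.al 1 := by
    ext n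
    rw [avoiderGF, coeff_mk, avoider_card, card_full S n]
  rw [this]
  exact hS
end

section
/- Let T = {1243, 1423, 2314} (patterns of length 4). Then the generating function for T-avoiders satisfies, as formal power series over ℚ, (x·(2x^2-2x+1)·C(x) - (1-x)·(3x^2-3x+1))·F_T(x) = x·(2x^2-2x+1)·C(x) - (3x^2-3x+1), where C(x) is the Catalan number generating function. -/
open PowerSeries

namespace TriAv

def ins (f : ℕ → ℕ) (j n : ℕ) : ℕ → ℕ := fun i =>
  if i < j then f i else if i = j then n else f (i - 1)

def sk (j a : ℕ) : ℕ := if a < j then a else a + 1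

lemma ins_sk (f : ℕ → ℕ) (j n a : ℕ) : ins f j n (sk j a) = f a := by
  unfold ins sk
  split_ifs <;> first | rfl | omega

lemma ins_self (f : ℕ → ℕ) (j n : ℕ) : ins f j n j = n := by simp [ins]

lemma sk_cases (j a : ℕ) : j = a ∨ ∃ b, a = sk j b := by
  rcases lt_trichotomy a j with h | h | h
  · right; exact ⟨a, by simp [sk, h]⟩
  · left; exact h.symm
  · right; refine ⟨a - 1, ?_⟩
    unfold sk; split_ifs <;> omega

lemma sk_lt_sk {j a b : ℕ} : sk j a < sk j b ↔ a < b := by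
  unfold sk; split_ifs <;> omega
lemma sk_lt {j a : ℕ} : sk j a < j ↔ a < j := by
  unfold sk; split_ifs <;> omega
lemma lt_sk {j a : ℕ} : j < sk j a ↔ j ≤ a := by
  unfold sk; split_ifs <;> omega
lemma sk_lt_low {j a i : ℕ} (h : i ≤ j) : sk j a < i ↔ a < i := by
  unfold sk; split_ifs <;> omega
lemma sk_lt_high {j a i : ℕ} (h : j ≤ i) : sk j a < i + 1 ↔ a < i := by
  unfold sk; split_ifs <;> omega

/-- avoidance of 1023, 1203, 0312 -/
def Av (f : ℕ → ℕ) (n : ℕ) : Prop := ∀ a b c d, a < b → b < c → c < d → d < n →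
  ¬ (f b < f a ∧ f a < f c ∧ f c < f d) ∧ ¬ (f c < f a ∧ f a < f b ∧ f b < f d) ∧
  ¬ (f a < f c ∧ f c < f d ∧ f d < f b)

def Act (f : ℕ → ℕ) (n j : ℕ) : Prop := j ≤ n ∧
  (∀ a b c, a < b → b < c → c < j → ¬ (f b < f a ∧ f a < f c) ∧ ¬ (f c < f a ∧ f a < f b)) ∧
  (∀ a b c, a < j → j ≤ b → b < c → c < n → ¬ (f a < f b ∧ f b < f c))

def R (f : ℕ → ℕ) (j i : ℕ) : Prop := ∀ a b, a < i → i ≤ b → b < j → f b ≤ f a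
def G (f : ℕ → ℕ) (i j : ℕ) : Prop := ∀ a b, a < j → j ≤ b → b < i → f a ≤ f b
def D (f : ℕ → ℕ) (j : ℕ) : Prop := ∀ a b, a < b → b < j → f a ≤ f b
def Bd (f : ℕ → ℕ) (n : ℕ) : Prop := ∀ i, i < n → f i < n

lemma Bd.ins {f : ℕ → ℕ} {n : ℕ} (h : Bd f n) {j : ℕ} (hj : j ≤ n) : Bd (ins f j n) (n+1) := by
  intro i hi
  rcases sk_cases j i with rfl | ⟨b, rfl⟩
  · rw [ins_self]; omega
  · rw [ins_sk]; have := h b ((sk_lt_high hj).1 hi); omega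

lemma av_ins {f : ℕ → ℕ} {n j : ℕ} (hb : Bd f n) (hj : j ≤ n) :
    Av (ins f j n) (n+1) ↔ Av f n ∧ Act f n j := by
  constructor
  · intro h
    refine ⟨?_, hj, ?_, ?_⟩
    · intro a b c d h1 h2 h3 h4
      have := h (sk j a) (sk j b) (sk j c) (sk j d) (sk_lt_sk.2 h1) (sk_lt_sk.2 h2)
        (sk_lt_sk.2 h3) ((sk_lt_high hj).2 h4)
      simpa only [ins_sk] using this
    · intro a b c h1 h2 h3
      have := h (sk j a) (sk j b) (sk j c) j (sk_lt_sk.2 h1) (sk_lt_sk.2 h2)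
        (sk_lt.2 h3) (by omega)
      simp only [ins_sk, ins_self] at this
      have h5 := hb b (by omega)
      have h6 := hb c (by omega)
      omega
    · intro a b c h1 h2 h3 h4
      have := h (sk j a) j (sk j b) (sk j c) (sk_lt.2 h1) (lt_sk.2 h2)
        (sk_lt_sk.2 h3) ((sk_lt_high hj).2 h4)
      simp only [ins_sk, ins_self] at this
      have h6 := hb c (by omega)
      omega
  · rintro ⟨h, -, h1, h2⟩ a b c d hab hbc hcd hd
    rcases sk_cases j a with rfl | ⟨a, rfl⟩ <;> rcases sk_cases j b with rfl | ⟨b, rfl⟩ <;>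
    rcases sk_cases j c with rfl | ⟨c, rfl⟩ <;> rcases sk_cases j d with rfl | ⟨d, rfl⟩ <;>
    first
    | (exfalso; omega)
    | skip
    all_goals simp only [sk_lt_sk, sk_lt, lt_sk, sk_lt_high hj] at hab hbc hcd hd
    all_goals simp only [ins_sk, ins_self]
    · have := hb b (by omega); have := hb c (by omega); have := hb d (by omega); omega
    · have := h2 a c d hab hbc hcd hd
      have := hb a (by omega); have := hb c (by omega); have := hb d (by omega); omega
    · have := hb a (by omega); have := hb b (by omega); have := hb d (by omega); omega
    · have := h1 a b c hab hbc hcd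
      have := hb a (by omega); have := hb b (by omega); have := hb c (by omega); omega
    · exact h a b c d hab hbc hcd hd

lemma act_low {f : ℕ → ℕ} {n j i : ℕ} (hb : Bd f n) (hj : j ≤ n) (hi : i ≤ j) :
    Act (ins f j n) (n+1) i ↔ Act f n i ∧ R f j i := by
  constructor
  · rintro ⟨-, h1, h2⟩
    refine ⟨⟨by omega, ?_, ?_⟩, ?_⟩
    · intro a b c hab hbc hc
      have := h1 (sk j a) (sk j b) (sk j c) (sk_lt_sk.2 hab) (sk_lt_sk.2 hbc) ((sk_lt_low hi).2 hc)
      simpa only [ins_sk] using this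
    · intro a b c ha hb hbc hc
      have := h2 (sk j a) (sk j b) (sk j c) ((sk_lt_low hi).2 ha)
        (not_lt.1 (fun h => absurd ((sk_lt_low hi).1 h) (by omega))) (sk_lt_sk.2 hbc) ((sk_lt_high hj).2 hc)
      simpa only [ins_sk] using this
    · intro a b ha hib hbj
      have := h2 (sk j a) (sk j b) j ((sk_lt_low hi).2 ha)
        (not_lt.1 (fun h => absurd ((sk_lt_low hi).1 h) (by omega))) (sk_lt.2 hbj) (by omega)
      simp only [ins_sk, ins_self] at this
      have := hb b (by omega)
      omega
  · rintro ⟨⟨-, h1, h2⟩, h3⟩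
    refine ⟨by omega, ?_, ?_⟩
    · intro a b c hab hbc hc
      rcases sk_cases j a with rfl | ⟨a, rfl⟩
      · omega
      rcases sk_cases j b with rfl | ⟨b, rfl⟩
      · omega
      rcases sk_cases j c with rfl | ⟨c, rfl⟩
      · omega
      simp only [sk_lt_sk, sk_lt_low hi] at hab hbc hc
      simp only [ins_sk]
      exact h1 a b c hab hbc hc
    · intro a b c ha hib hbc hc
      rcases sk_cases j a with rfl | ⟨a, rfl⟩
      · omega
      have ha' := (sk_lt_low hi).1 ha
      rcases sk_cases j b with rfl | ⟨b, rfl⟩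
      · rcases sk_cases j c with rfl | ⟨c, rfl⟩
        · omega
        · have := hb c ((sk_lt_high hj).1 hc)
          simp only [ins_sk, ins_self]; omega
      have hib' : i ≤ b := not_lt.1 (fun h => absurd ((sk_lt_low hi).2 h) (by omega))
      rcases sk_cases j c with rfl | ⟨c, rfl⟩
      · have := h3 a b ha' hib' (sk_lt.1 hbc)
        simp only [ins_sk, ins_self]; omega
      · simp only [ins_sk]
        exact h2 a b c ha' hib' (sk_lt_sk.1 hbc) ((sk_lt_high hj).1 hc)

lemma act_high {f : ℕ → ℕ} {n j i : ℕ} (hb : Bd f n) (hi : j ≤ i) (hin : i ≤ n) :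
    Act (ins f j n) (n+1) (i+1) ↔ Act f n i ∧ G f i j ∧ D f j := by
  have hj : j ≤ n := by omega
  constructor
  · rintro ⟨-, h1, h2⟩
    refine ⟨⟨hin, ?_, ?_⟩, ?_, ?_⟩
    · intro a b c hab hbc hc
      have := h1 (sk j a) (sk j b) (sk j c) (sk_lt_sk.2 hab) (sk_lt_sk.2 hbc) ((sk_lt_high hi).2 hc)
      simpa only [ins_sk] using this
    · intro a b c ha hb hbc hc
      have := h2 (sk j a) (sk j b) (sk j c) ((sk_lt_high hi).2 ha)
        (not_lt.1 (fun h => absurd ((sk_lt_high hi).1 h) (by omega))) (sk_lt_sk.2 hbc) ((sk_lt_high hj).2 hc)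
      simpa only [ins_sk] using this
    · intro a b ha hjb hbi
      have := h1 (sk j a) j (sk j b) (sk_lt.2 ha) (lt_sk.2 hjb) ((sk_lt_high hi).2 hbi)
      simp only [ins_sk, ins_self] at this
      have := hb a (by omega)
      omega
    · intro a b hab hbj
      have := h1 (sk j a) (sk j b) j (sk_lt_sk.2 hab) (sk_lt.2 hbj) (by omega)
      simp only [ins_sk, ins_self] at this
      have := hb a (by omega)
      omega
  · rintro ⟨⟨-, h1, h2⟩, h3, h4⟩
    refine ⟨by omega, ?_, ?_⟩
    · intro a b c hab hbc hc
      rcases sk_cases j a with rfl | ⟨a, rfl⟩ <;> rcases sk_cases j b with rfl | ⟨b, rfl⟩ <;>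
      rcases sk_cases j c with rfl | ⟨c, rfl⟩ <;>
      first
      | (exfalso; omega)
      | skip
      all_goals simp only [sk_lt_sk, sk_lt, lt_sk, sk_lt_high hi] at hab hbc hc
      all_goals simp only [ins_sk, ins_self]
      · have := hb b (by omega); have := hb c (by omega); omega
      · have := h3 a c hab hbc hc
        have := hb a (by omega); omega
      · have := h4 a b hab hbc
        have := hb a (by omega); omega
      · exact h1 a b c hab hbc hc
    · intro a b c ha hib hbc hc
      rcases sk_cases j b with rfl | ⟨b, rfl⟩
      · omega
      have hib' : i ≤ b := not_lt.1 (fun h => absurd ((sk_lt_high hi).2 h) (by omega))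
      rcases sk_cases j c with rfl | ⟨c, rfl⟩
      · omega
      have hbc := sk_lt_sk.1 hbc
      have hc := (sk_lt_high hj).1 hc
      rcases sk_cases j a with rfl | ⟨a, rfl⟩
      · simp only [ins_sk, ins_self]
        have := hb b (by omega); omega
      · simp only [ins_sk]
        exact h2 a b c ((sk_lt_high hi).1 ha) hib' hbc hc

/-- relations after insertion -/
lemma R_low {f : ℕ → ℕ} {n j i k : ℕ} (hk : k ≤ j) : R (ins f j n) k i ↔ R f k i := by
  unfold R
  constructor <;> intro h a b ha hb hbk <;> have := h a b ha hb hbk <;>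
    simpa [ins, show a < j by omega, show b < j by omega] using this

lemma D_low {f : ℕ → ℕ} {n j k : ℕ} (hk : k ≤ j) : D (ins f j n) k ↔ D f k := by
  unfold D
  constructor <;> intro h a b ha hb <;> have := h a b ha hb <;>
    simpa [ins, show a < j by omega, show b < j by omega] using this

lemma R_high {f : ℕ → ℕ} {n j i k : ℕ} (hi : j ≤ i) :
    R (ins f j n) (k+1) (i+1) → R f k i := by
  intro h a b ha hb hbk
  have := h (sk j a) (sk j b) ((sk_lt_high hi).2 ha)
    (not_lt.1 (fun h => absurd ((sk_lt_high hi).1 h) (by omega)))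
    ((sk_lt_high (by omega)).2 hbk)
  simpa only [ins_sk] using this

lemma R_zero {f : ℕ → ℕ} {n i k : ℕ} (hb : Bd f n) (hk : k ≤ n) (h : R f k i) :
    R (ins f 0 n) (k+1) (i+1) := by
  intro a b ha hib hbk
  have : b ≠ 0 := by omega
  rcases Nat.eq_zero_or_pos a with rfl | ha0
  · have := hb (b-1) (by omega)
    simp [ins, show b ≠ 0 by omega]; omega
  · have := h (a-1) (b-1) (by omega) (by omega) (by omega)
    simpa [ins, show b ≠ 0 by omega, show a ≠ 0 by omega] using this

lemma R_triv0 (f : ℕ → ℕ) (k : ℕ) : R f k 0 := by intro a b ha; omega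
lemma R_self (f : ℕ → ℕ) (k : ℕ) : R f k k := by intro a b ha; omega
lemma G_self (f : ℕ → ℕ) (k : ℕ) : G f k k := by intro a b ha; omega
lemma G_triv0 (f : ℕ → ℕ) (k : ℕ) : G f k 0 := by intro a b ha; omega
lemma D_0 (f : ℕ → ℕ) : D f 0 := by intro a b ha; omega
lemma D_1 (f : ℕ → ℕ) : D f 1 := by intro a b ha; omega

/-- master description of active sites after insertion -/
lemma act_ins {f : ℕ → ℕ} {n j : ℕ} (hb : Bd f n) (hj : j ≤ n) (i : ℕ) :
    Act (ins f j n) (n+1) i ↔ (i ≤ j ∧ Act f n i ∧ R f j i) ∨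
      (∃ k, i = k + 1 ∧ j ≤ k ∧ Act f n k ∧ G f k j ∧ D f j) := by
  constructor
  · intro h
    by_cases hi : i ≤ j
    · exact Or.inl ⟨hi, (act_low hb hj hi).1 h⟩
    · right
      obtain ⟨k, rfl⟩ : ∃ k, i = k + 1 := ⟨i - 1, by omega⟩
      exact ⟨k, rfl, by omega, (act_high hb (by omega) (by have := h.1; omega)).1 h⟩
  · rintro (⟨h1, h2⟩ | ⟨k, rfl, h1, h2⟩)
    · exact (act_low hb hj h1).2 h2
    · exact (act_high hb h1 h2.1.1).2 h2

def Inj (f : ℕ → ℕ) (n : ℕ) : Prop := ∀ a b, a < b → b < n → f a ≠ f b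

lemma Inj.ins {f : ℕ → ℕ} {n : ℕ} (h : Inj f n) (hb : Bd f n) {j : ℕ} (hj : j ≤ n) :
    Inj (ins f j n) (n+1) := by
  intro a b hab hbn
  rcases sk_cases j a with rfl | ⟨a, rfl⟩
  · rcases sk_cases j b with rfl | ⟨b, rfl⟩
    · omega
    · rw [ins_self, ins_sk]; have := hb b ((sk_lt_high hj).1 hbn); omega
  · rcases sk_cases j b with rfl | ⟨b, rfl⟩
    · rw [ins_self, ins_sk]; have := hb a (by have := sk_lt.1 hab; omega); omega
    · rw [ins_sk, ins_sk]; exact h a b (sk_lt_sk.1 hab) ((sk_lt_high hj).1 hbn)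

structure StU (f : ℕ → ℕ) (n r : ℕ) (M : Finset ℕ) : Prop where
  bd : Bd f n
  inj : Inj f n
  two : 2 ≤ r
  act : ∀ i, Act f n i ↔ i < r ∨ i ∈ M
  big : ∀ j ∈ M, r ≤ j
  rel : ∀ j, (j < r ∨ j ∈ M) → ∀ i, i < r → R f j i
  nrel : ∀ i ∈ M, ∀ j ∈ M, i < j → ¬ R f j i

structure StB (f : ℕ → ℕ) (n j : ℕ) : Prop where
  bd : Bd f n
  inj : Inj f n
  act : ∀ i, Act f n i ↔ i = 0 ∨ i = j
  nd : ¬ D f j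

structure StZ (f : ℕ → ℕ) (n p q : ℕ) (M : Finset ℕ) : Prop where
  bd : Bd f n
  inj : Inj f n
  pos : 0 < p
  lt : p < q
  big : ∀ k ∈ M, q < k
  act : ∀ i, Act f n i ↔ i = 0 ∨ i = p ∨ i = q ∨ i ∈ M
  dp : D f p
  dq : D f q
  gqp : G f q p
  gp : ∀ k ∈ M, G f k p
  ngq : ∀ k ∈ M, ¬ G f k q
  nd : ∀ k ∈ M, ¬ D f k
  rqp : ¬ R f q p
  rp : ∀ k ∈ M, ¬ R f k p
  rq : ∀ k ∈ M, ¬ R f k q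
  rr : ∀ i ∈ M, ∀ k ∈ M, i < k → ¬ R f k i

lemma StB.two {f : ℕ → ℕ} {n j : ℕ} (h : StB f n j) : 2 ≤ j := by
  by_contra hc
  apply h.nd
  intro a b hab hb; omega

lemma R_ge {f : ℕ → ℕ} {j i : ℕ} (h : j ≤ i) : R f j i := by intro a b; omega

lemma StU.nd {f : ℕ → ℕ} {n r : ℕ} {M : Finset ℕ} (h : StU f n r M) {j : ℕ}
    (hj : j < r ∨ j ∈ M) (h2 : 2 ≤ j) : ¬ D f j := by
  intro hd
  have h1 := hd 0 1 (by omega) (by omega)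
  have h3 := h.rel j hj 1 (by have := h.two; omega) 0 1 (by omega) (by omega) (by omega)
  have h4 := ((h.act j).2 hj).1
  have := h.inj 0 1 (by omega) (by omega)
  omega

lemma StU.ng {f : ℕ → ℕ} {n r : ℕ} {M : Finset ℕ} (h : StU f n r M) {j : ℕ}
    (hj : j < r ∨ j ∈ M) (h2 : 2 ≤ j) : ¬ G f j 1 := by
  intro hd
  have h1 := hd 0 1 (by omega) (by omega) (by omega)
  have h3 := h.rel j hj 1 (by have := h.two; omega) 0 1 (by omega) (by omega) (by omega)
  have h4 := ((h.act j).2 hj).1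
  have := h.inj 0 1 (by omega) (by omega)
  omega

/-- inserting at site 0 -/
lemma act_ins0 {f : ℕ → ℕ} {n : ℕ} (hb : Bd f n) (h0 : Act f n 0) (i : ℕ) :
    Act (ins f 0 n) (n+1) i ↔ i = 0 ∨ ∃ k, i = k + 1 ∧ Act f n k := by
  rw [act_ins hb (by omega)]
  constructor
  · rintro (h | ⟨k, h1, h2, h3, h4⟩)
    · left; omega
    · exact Or.inr ⟨k, h1, h3⟩
  · rintro (rfl | ⟨k, h1, h2⟩)
    · exact Or.inl ⟨le_rfl, h0, R_self _ _⟩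
    · exact Or.inr ⟨k, h1, by omega, h2, G_triv0 _ _, D_0 _⟩

lemma R_one {f : ℕ → ℕ} {n k : ℕ} (hb : Bd f n) (hk : k ≤ n) : R (ins f 0 n) (k+1) 1 :=
  R_zero hb hk (R_triv0 _ _)

lemma StU.c0 {f : ℕ → ℕ} {n r : ℕ} {M : Finset ℕ} (h : StU f n r M) :
    StU (ins f 0 n) (n+1) (r+1) (M.image (· + 1)) := by
  have h2 := h.two
  have hact : ∀ i, Act (ins f 0 n) (n+1) i ↔ i < r + 1 ∨ i ∈ M.image (· + 1) := by
    intro i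
    rw [act_ins0 h.bd ((h.act 0).2 (by omega))]
    simp only [h.act, Finset.mem_image]
    constructor
    · rintro (h | ⟨k, rfl, h | h⟩)
      · left; omega
      · left; omega
      · right; exact ⟨k, h, rfl⟩
    · rintro (h | ⟨k, h, rfl⟩)
      · rcases Nat.eq_zero_or_pos i with h0 | h0
        · left; exact h0
        · right; exact ⟨i - 1, by omega, by omega⟩
      · right; exact ⟨k, rfl, Or.inr h⟩
  refine ⟨h.bd.ins (by omega), h.inj.ins h.bd (by omega), by omega, hact, ?_, ?_, ?_⟩
  · intro j hj
    obtain ⟨k, hk, rfl⟩ := Finset.mem_image.1 hj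
    have := h.big k hk
    omega
  · intro j hj i hi
    rcases Nat.eq_zero_or_pos i with rfl | hi0
    · exact R_triv0 _ _
    rcases Nat.eq_zero_or_pos j with rfl | hj0
    · exact R_ge (by omega)
    obtain ⟨j, rfl⟩ : ∃ k, j = k + 1 := ⟨j - 1, by omega⟩
    obtain ⟨i, rfl⟩ : ∃ k, i = k + 1 := ⟨i - 1, by omega⟩
    have hj' : j < r ∨ j ∈ M := by
      rcases hj with hj | hj
      · left; omega
      · right; simpa using hj
    exact R_zero h.bd ((h.act j).2 hj').1 (h.rel j hj' i (by omega))
  · intro i hi j hj hij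
    obtain ⟨i, hi', rfl⟩ := Finset.mem_image.1 hi
    obtain ⟨j, hj', rfl⟩ := Finset.mem_image.1 hj
    intro hR
    exact h.nrel i hi' j hj' (by simpa using hij) (R_high (Nat.zero_le _) hR)

lemma nR_top {f : ℕ → ℕ} {n j k i : ℕ} (hb : Bd f n) (hj : j ≤ n) (h0 : 0 < i) (hi : i ≤ j)
    (hk : j < k) : ¬ R (ins f j n) k i := by
  intro h
  have := h 0 j (by omega) (by omega) hk
  rw [ins_self] at this
  have h3 : ins f j n 0 = f 0 := by simp [ins, show 0 < j by omega]
  have := hb 0 (by omega)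
  omega

lemma D_top {f : ℕ → ℕ} {n j : ℕ} (hb : Bd f n) (hj : j ≤ n) (h : D f j) :
    D (ins f j n) (j+1) := by
  intro a b hab hbj
  have h3 : ins f j n a = f a := by simp [ins, show a < j by omega]
  rcases Nat.lt_or_ge b j with h1 | h1
  · have h4 : ins f j n b = f b := by simp [ins, h1]
    rw [h3, h4]; exact h a b hab h1
  · obtain rfl : b = j := by omega
    rw [h3, ins_self]; have := hb a (by omega); omega

lemma G_top {f : ℕ → ℕ} {n j k : ℕ} (hb : Bd f n) (hj : j ≤ n) (h : G f k j) :
    G (ins f j n) (k+1) j := by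
  intro a b haj hjb hbk
  have h3 : ins f j n a = f a := by simp [ins, haj]
  rw [h3]
  rcases sk_cases j b with rfl | ⟨b, rfl⟩
  · rw [ins_self]; have := hb a (by omega); omega
  · rw [ins_sk]
    have h5 : ¬ b < j := fun h => absurd (sk_lt.2 h) (by omega)
    exact h a b haj (by omega) ((sk_lt_high (by have := sk_lt_high (a := b) (le_refl j); omega)).1 hbk)

/-- insertion at an increasing prefix with nothing surviving beyond -/
lemma stZ_new {f : ℕ → ℕ} {n j : ℕ} (hb : Bd f n) (hinj : Inj f n) (h0 : 0 < j) (hj : j ≤ n)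
    (hd : D f j) (hact : ∀ i, Act (ins f j n) (n+1) i ↔ i = 0 ∨ i = j ∨ i = j + 1) :
    StZ (ins f j n) (n+1) j (j+1) ∅ := by
  refine ⟨hb.ins hj, hinj.ins hb hj, h0, by omega, by simp, by simpa using hact,
    (D_low le_rfl).2 hd, D_top hb hj hd, G_top hb hj (G_self _ _), by simp, by simp, by simp,
    nR_top hb hj h0 le_rfl (by omega), by simp, by simp, by simp⟩

lemma StU.c1 {f : ℕ → ℕ} {n r : ℕ} {M : Finset ℕ} (h : StU f n r M) :
    StZ (ins f 1 n) (n+1) 1 2 ∅ := by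
  have h2 := h.two
  have hA1 := (h.act 1).2 (by omega)
  have hA0 := (h.act 0).2 (by omega)
  have hn := hA1.1
  refine stZ_new h.bd h.inj one_pos hn (D_1 _) ?_
  intro i
  rw [act_ins h.bd hn]
  constructor
  · rintro (h1 | ⟨k, rfl, h1, h3, h4, h5⟩)
    · omega
    · rcases Nat.lt_or_ge 1 k with h6 | h6
      · exact absurd h4 (h.ng ((h.act k).1 h3) h6)
      · omega
  · rintro (rfl | rfl | rfl)
    · exact Or.inl ⟨by omega, hA0, R_triv0 _ _⟩
    · exact Or.inl ⟨by omega, hA1, R_self _ _⟩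
    · exact Or.inr ⟨1, rfl, le_rfl, hA1, G_self _ _, D_1 _⟩

lemma StU.cM {f : ℕ → ℕ} {n r : ℕ} {M : Finset ℕ} (h : StU f n r M) {j : ℕ} (hj : j ∈ M) :
    StU (ins f j n) (n+1) r {j} := by
  have h2 := h.two
  have hrj := h.big j hj
  have hA := (h.act j).2 (Or.inr hj)
  have hn := hA.1
  refine ⟨h.bd.ins hn, h.inj.ins h.bd hn, h2, ?_, by simpa using hrj, ?_, by simp⟩
  · intro i
    rw [act_ins h.bd hn, Finset.mem_singleton]
    constructor
    · rintro (⟨h1, h3, h4⟩ | ⟨k, rfl, h1, h3, h4, h5⟩)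
      · rcases (h.act i).1 h3 with h6 | h6
        · exact Or.inl h6
        · right
          by_contra hne
          exact h.nrel i h6 j hj (by omega) h4
      · exact absurd h5 (h.nd (Or.inr hj) (by omega))
    · rintro (h1 | rfl)
      · exact Or.inl ⟨by omega, (h.act i).2 (Or.inl h1), h.rel j (Or.inr hj) i h1⟩
      · exact Or.inl ⟨le_rfl, hA, R_self _ _⟩
  · intro k hk i hi
    rw [Finset.mem_singleton] at hk
    rw [R_low (by omega)]
    apply h.rel k _ i hi
    rcases hk with hk | rfl
    · exact Or.inl hk
    · exact Or.inr hj

lemma StU.cj {f : ℕ → ℕ} {n r : ℕ} {M : Finset ℕ} (h : StU f n r M) {j : ℕ} (hj : 2 ≤ j)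
    (hjr : j < r) : StU (ins f j n) (n+1) j {j} := by
  have hA := (h.act j).2 (Or.inl hjr)
  have hn := hA.1
  refine ⟨h.bd.ins hn, h.inj.ins h.bd hn, hj, ?_, by simp, ?_, by simp⟩
  · intro i
    rw [act_ins h.bd hn, Finset.mem_singleton]
    constructor
    · rintro (⟨h1, h3, h4⟩ | ⟨k, rfl, h1, h3, h4, h5⟩)
      · omega
      · exact absurd h5 (h.nd (Or.inl hjr) (by omega))
    · intro h1
      exact Or.inl ⟨by omega, (h.act i).2 (Or.inl (by omega)),
        h.rel j (Or.inl hjr) i (by omega)⟩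
  · intro k hk i hi
    rw [Finset.mem_singleton] at hk
    rw [R_low (by omega)]
    exact h.rel k (Or.inl (by omega)) i (by omega)

lemma StB.c0 {f : ℕ → ℕ} {n j : ℕ} (h : StB f n j) : StU (ins f 0 n) (n+1) 2 {j+1} := by
  have h2 := h.two
  have hn := ((h.act j).2 (Or.inr rfl)).1
  refine ⟨h.bd.ins (by omega), h.inj.ins h.bd (by omega), le_rfl, ?_, by simp; omega, ?_, by simp⟩
  · intro i
    rw [act_ins0 h.bd ((h.act 0).2 (Or.inl rfl)), Finset.mem_singleton]
    simp only [h.act]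
    constructor
    · rintro (rfl | ⟨k, rfl, rfl | rfl⟩) <;> omega
    · intro h1
      rcases Nat.eq_zero_or_pos i with h0 | h0
      · exact Or.inl h0
      · exact Or.inr ⟨i - 1, by omega, by omega⟩
  · intro k hk i hi
    rw [Finset.mem_singleton] at hk
    rcases Nat.eq_zero_or_pos i with rfl | hi0
    · exact R_triv0 _ _
    obtain rfl : i = 1 := by omega
    rcases hk with hk | rfl
    · exact R_ge (by omega)
    · exact R_one h.bd hn

lemma StB.cj {f : ℕ → ℕ} {n j : ℕ} (h : StB f n j) : StB (ins f j n) (n+1) j := by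
  have hA := (h.act j).2 (Or.inr rfl)
  have hn := hA.1
  refine ⟨h.bd.ins hn, h.inj.ins h.bd hn, ?_, by rw [D_low le_rfl]; exact h.nd⟩
  intro i
  rw [act_ins h.bd hn]
  constructor
  · rintro (⟨h1, h3, h4⟩ | ⟨k, rfl, h1, h3, h4, h5⟩)
    · exact (h.act i).1 h3
    · exact absurd h5 h.nd
  · rintro (rfl | rfl)
    · exact Or.inl ⟨by omega, (h.act 0).2 (Or.inl rfl), R_triv0 _ _⟩
    · exact Or.inl ⟨le_rfl, hA, R_self _ _⟩

lemma StZ.c0 {f : ℕ → ℕ} {n p q : ℕ} {M : Finset ℕ} (h : StZ f n p q M) :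
    StU (ins f 0 n) (n+1) 2 ((insert p (insert q M)).image (· + 1)) := by
  have hp := h.pos
  have hpq := h.lt
  have hA0 := (h.act 0).2 (Or.inl rfl)
  refine ⟨h.bd.ins (by omega), h.inj.ins h.bd (by omega), le_rfl, ?_, ?_, ?_, ?_⟩
  · intro i
    rw [act_ins0 h.bd hA0]
    simp only [h.act, Finset.mem_image, Finset.mem_insert]
    constructor
    · rintro (rfl | ⟨k, rfl, h1 | h1⟩)
      · left; omega
      · left; omega
      · right; exact ⟨k, h1, rfl⟩
    · rintro (h1 | ⟨k, h1, rfl⟩)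
      · rcases Nat.eq_zero_or_pos i with h0 | h0
        · exact Or.inl h0
        · exact Or.inr ⟨0, by omega, Or.inl rfl⟩
      · exact Or.inr ⟨k, rfl, Or.inr h1⟩
  · intro j hj
    simp only [Finset.mem_image, Finset.mem_insert] at hj
    obtain ⟨k, h1 | h1 | h1, rfl⟩ := hj
    · omega
    · omega
    · have := h.big k h1; omega
  · intro k hk i hi
    rcases Nat.eq_zero_or_pos i with rfl | hi0
    · exact R_triv0 _ _
    obtain rfl : i = 1 := by omega
    rcases hk with hk | hk
    · exact R_ge (by omega)
    · simp only [Finset.mem_image, Finset.mem_insert] at hk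
      obtain ⟨k, h1, rfl⟩ := hk
      exact R_one h.bd ((h.act k).2 (Or.inr h1)).1
  · intro i hi j hj hij hR
    simp only [Finset.mem_image, Finset.mem_insert] at hi hj
    obtain ⟨i, hi, rfl⟩ := hi
    obtain ⟨j, hj, rfl⟩ := hj
    have hR := R_high (Nat.zero_le _) hR
    rcases hi with rfl | rfl | hi <;> rcases hj with rfl | rfl | hj
    · omega
    · exact h.rqp hR
    · exact h.rp _ hj hR
    · omega
    · omega
    · exact h.rq _ hj hR
    · have := h.big i hi; omega
    · have := h.big i hi; omega
    · exact h.rr i hi j hj (by omega) hR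

lemma StZ.cq {f : ℕ → ℕ} {n p q : ℕ} {M : Finset ℕ} (h : StZ f n p q M) :
    StZ (ins f q n) (n+1) q (q+1) ∅ := by
  have hp := h.pos
  have hpq := h.lt
  have hA0 := (h.act 0).2 (Or.inl rfl)
  have hA := (h.act q).2 (by simp)
  have hn := hA.1
  refine stZ_new h.bd h.inj (by omega) hn h.dq ?_
  intro i
  rw [act_ins h.bd hn]
  constructor
  · rintro (⟨h1, h3, h4⟩ | ⟨k, rfl, h1, h3, h4, h5⟩)
    · rcases (h.act i).1 h3 with rfl | rfl | rfl | h6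
      · simp
      · exact absurd h4 h.rqp
      · simp
      · have := h.big _ h6; omega
    · rcases (h.act k).1 h3 with rfl | rfl | rfl | h6
      · omega
      · omega
      · simp
      · exact absurd h4 (h.ngq _ h6)
  · rintro (rfl | rfl | rfl)
    · exact Or.inl ⟨by omega, hA0, R_triv0 _ _⟩
    · exact Or.inl ⟨le_rfl, hA, R_self _ _⟩
    · exact Or.inr ⟨q, rfl, le_rfl, hA, G_self _ _, h.dq⟩

lemma StZ.cM {f : ℕ → ℕ} {n p q : ℕ} {M : Finset ℕ} (h : StZ f n p q M) {j : ℕ} (hj : j ∈ M) :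
    StB (ins f j n) (n+1) j := by
  have hA := (h.act j).2 (by simp [hj])
  have hn := hA.1
  refine ⟨h.bd.ins hn, h.inj.ins h.bd hn, ?_, by rw [D_low le_rfl]; exact h.nd j hj⟩
  intro i
  rw [act_ins h.bd hn]
  constructor
  · rintro (⟨h1, h3, h4⟩ | ⟨k, rfl, h1, h3, h4, h5⟩)
    · rcases (h.act i).1 h3 with rfl | rfl | rfl | h6
      · simp
      · exact absurd h4 (h.rp _ hj)
      · exact absurd h4 (h.rq _ hj)
      · right
        by_contra hne
        exact h.rr i h6 j hj (by omega) h4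
    · exact absurd h5 (h.nd _ hj)
  · rintro (rfl | rfl)
    · exact Or.inl ⟨by omega, (h.act 0).2 (Or.inl rfl), R_triv0 _ _⟩
    · exact Or.inl ⟨le_rfl, hA, R_self _ _⟩

lemma StZ.cp {f : ℕ → ℕ} {n p q : ℕ} {M : Finset ℕ} (h : StZ f n p q M) :
    StZ (ins f p n) (n+1) p (p+1) ((insert q M).image (· + 1)) := by
  have hp := h.pos
  have hpq := h.lt
  have hA0 := (h.act 0).2 (Or.inl rfl)
  have hA := (h.act p).2 (by simp)
  have hn := hA.1
  have hbig : ∀ k ∈ insert q M, p < k := by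
    intro k hk
    rcases Finset.mem_insert.1 hk with rfl | hk
    · exact hpq
    · have := h.big k hk; omega
  have hG : ∀ k ∈ insert q M, G f k p := by
    intro k hk
    rcases Finset.mem_insert.1 hk with rfl | hk
    · exact h.gqp
    · exact h.gp k hk
  have hAk : ∀ k ∈ insert q M, Act f n k := by
    intro k hk
    rw [h.act]
    rcases Finset.mem_insert.1 hk with rfl | hk <;> simp [*]
  have hRp : ∀ k ∈ insert q M, ¬ R f k p := by
    intro k hk
    rcases Finset.mem_insert.1 hk with rfl | hk
    · exact h.rqp
    · exact h.rp k hk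
  have key : ∀ P : ℕ → Prop, (∀ k ∈ insert q M, P (k+1)) →
      ∀ k ∈ (insert q M).image (· + 1), P k := by
    intro P hP k hk
    obtain ⟨k, hk', rfl⟩ := Finset.mem_image.1 hk
    exact hP k hk'
  have hfp : ∀ k, p < k → k ≤ n → ins f p n (p+1) < n := by
    intro k hk hkn
    have : ins f p n (p+1) = f p := by simp [ins]
    rw [this]; exact h.bd p (by omega)
  refine ⟨h.bd.ins hn, h.inj.ins h.bd hn, hp, by omega, ?_, ?_, (D_low le_rfl).2 h.dp,
    D_top h.bd hn h.dp, G_top h.bd hn (G_self _ _), ?_, ?_, ?_,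
    nR_top h.bd hn hp le_rfl (by omega), ?_, ?_, ?_⟩
  · apply key; intro k hk; have := hbig k hk; omega
  · intro i
    rw [act_ins h.bd hn]
    constructor
    · rintro (⟨h1, h3, h4⟩ | ⟨k, rfl, h1, h3, h4, h5⟩)
      · rcases (h.act i).1 h3 with rfl | rfl | rfl | h6
        · simp
        · simp
        · omega
        · have := h.big _ h6; omega
      · rcases (h.act k).1 h3 with rfl | rfl | rfl | h6
        · omega
        · simp
        · simp
        · simp [h6]
    · rintro (rfl | rfl | rfl | h1)
      · exact Or.inl ⟨by omega, hA0, R_triv0 _ _⟩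
      · exact Or.inl ⟨le_rfl, hA, R_self _ _⟩
      · exact Or.inr ⟨p, rfl, le_rfl, hA, G_self _ _, h.dp⟩
      · obtain ⟨k, hk, rfl⟩ := Finset.mem_image.1 h1
        exact Or.inr ⟨k, rfl, (hbig k hk).le, hAk k hk, hG k hk, h.dp⟩
  · apply key; intro k hk; exact G_top h.bd hn (hG k hk)
  · apply key; intro k hk hc
    have h1 := hbig k hk
    have h2 := hfp k h1 (hAk k hk).1
    have := hc p (p+1) (by omega) (by omega) (by omega)
    rw [ins_self] at this; omega
  · apply key; intro k hk hc
    have h1 := hbig k hk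
    have h2 := hfp k h1 (hAk k hk).1
    have := hc p (p+1) (by omega) (by omega)
    rw [ins_self] at this; omega
  · apply key; intro k hk
    exact nR_top h.bd hn hp le_rfl (by have := hbig k hk; omega)
  · apply key; intro k hk hR
    exact hRp k hk (R_high le_rfl hR)
  · intro i hi k hk hik hR
    obtain ⟨i, hi', rfl⟩ := Finset.mem_image.1 hi
    obtain ⟨k, hk', rfl⟩ := Finset.mem_image.1 hk
    have hR := R_high (hbig i hi').le hR
    rcases Finset.mem_insert.1 hi' with rfl | hm <;> rcases Finset.mem_insert.1 hk' with rfl | hl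
    · simp at hik
    · exact h.rq _ hl hR
    · have := h.big i hm; simp at hik; omega
    · exact h.rr i hm k hl (by simpa using hik) hR

open Classical in
noncomputable def N : ℕ → ℕ → (ℕ → ℕ) → ℕ
  | 0, _, _ => 1
  | k+1, n, f => ∑ j ∈ (Finset.range (n+1)).filter (fun j => Act f n j), N k (n+1) (ins f j n)

lemma N_succ {k n : ℕ} {f : ℕ → ℕ} (S : Finset ℕ) (h : ∀ i, Act f n i ↔ i ∈ S) :
    N (k+1) n f = ∑ j ∈ S, N k (n+1) (ins f j n) := by
  classical
  rw [N]
  apply Finset.sum_congr _ (fun _ _ => rfl)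
  ext i
  rw [Finset.mem_filter, ← h, Finset.mem_range]
  exact ⟨fun h => h.2, fun h => ⟨by have := h.1; omega, h⟩⟩

section GF
variable (C H : PowerSeries ℚ)

noncomputable def uS (r L : ℕ) : PowerSeries ℚ :=
  (3*X^2 - 3*X + 1) * H * C^(r-1) * (1 + ((L : PowerSeries ℚ) - 1) * X * C)
noncomputable def bS : PowerSeries ℚ := H * ((3*X^2 - 3*X + 1) - X^2 * C)
noncomputable def zS (t : ℕ) : PowerSeries ℚ :=
  H * ((3*X^2 - 3*X + 1) + (X - X^2) * C) + (t : PowerSeries ℚ) * (H * X * C * (1 - 2*X))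

variable {C H}
variable (hC : X * C^2 = C - 1)
  (hH : ((1 - X) * (3*X^2 - 3*X + 1) - X * (2*X^2 - 2*X + 1) * C) * H = 1)

lemma sum_u (hC : X * C^2 = C - 1) (s : ℕ) :
    X * ∑ j ∈ Finset.Ico 2 (s+2), uS C H j 1 =
      (3*X^2 - 3*X + 1) * H * ((1 - X*C) * (C^s - 1)) := by
  induction s with
  | zero => simp
  | succ s ih =>
    rw [show s + 1 + 2 = (s + 2) + 1 by ring, Finset.sum_Ico_succ_top (by omega), mul_add, ih]
    simp only [uS, show s + 2 - 1 = s + 1 by omega, pow_succ]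
    push_cast
    linear_combination (3*X^2 - 3*X + 1) * H * C^s * hC

include hC hH in
lemma u_eq (s L : ℕ) : uS C H (s+2) L = 1 + X * (uS C H (s+3) L + zS C H 0 +
    ∑ j ∈ Finset.Ico 2 (s+2), uS C H j 1 + (L : PowerSeries ℚ) * uS C H (s+2) 1) := by
  have h := sum_u (H := H) hC s
  rw [mul_add, mul_add, h]
  simp only [uS, zS, show s + 2 - 1 = s + 1 by omega, show s + 3 - 1 = s + 2 by omega, pow_succ]
  push_cast
  linear_combination (-(3*X^2 - 3*X + 1) * H * C^s * (1 + ((L : PowerSeries ℚ) - 1) * X * C)) * hC + hH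

include hC hH in
lemma b_eq : bS C H = 1 + X * (uS C H 2 1 + bS C H) := by
  simp only [uS, bS]
  push_cast
  norm_num
  linear_combination hH

include hC hH in
lemma z_eq (t : ℕ) : zS C H t = 1 + X * (uS C H 2 (t+2) + zS C H (t+1) + zS C H 0 +
    (t : PowerSeries ℚ) * bS C H) := by
  simp only [uS, bS, zS]
  push_cast
  norm_num
  linear_combination hH - (3*X^2 - 3*X + 1) * H * ((t : PowerSeries ℚ) + 1) * X * hC

include hC hH in
lemma a_eq : (3*X^2 - 3*X + 1) * H = 1 + X * (uS C H 2 1 + zS C H 0) := by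
  simp only [uS, zS]
  push_cast
  norm_num
  linear_combination hH

lemma coeff_step (A B : PowerSeries ℚ) (h : A = 1 + X * B) (k : ℕ) :
    coeff (k+1) A = coeff k B := by
  rw [h]; simp [coeff_succ_X_mul, coeff_one]

lemma coeff_step0 (A B : PowerSeries ℚ) (h : A = 1 + X * B) :
    coeff 0 A = 1 := by
  rw [h]; simp

lemma coeff_natmul (k t : ℕ) (A : PowerSeries ℚ) :
    coeff k ((t : PowerSeries ℚ) * A) = t * coeff k A := by
  rw [← nsmul_eq_mul, map_nsmul, nsmul_eq_mul]

include hC hH in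
theorem main_count (k : ℕ) :
    (∀ f n r M, StU f n r M → (N k n f : ℚ) = coeff k (uS C H r M.card)) ∧
    (∀ f n j, StB f n j → (N k n f : ℚ) = coeff k (bS C H)) ∧
    (∀ f n p q M, StZ f n p q M → (N k n f : ℚ) = coeff k (zS C H M.card)) := by
  induction k with
  | zero =>
    refine ⟨?_, ?_, ?_⟩
    · intro f n r M h
      obtain ⟨s, rfl⟩ : ∃ s, r = s + 2 := ⟨r - 2, by have := h.two; omega⟩
      rw [coeff_step0 _ _ (u_eq hC hH s _)]; simp [N]
    · intro f n j h
      rw [coeff_step0 _ _ (b_eq hC hH)]; simp [N]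
    · intro f n p q M h
      rw [coeff_step0 _ _ (z_eq hC hH _)]; simp [N]
  | succ k ih =>
    obtain ⟨ihU, ihB, ihZ⟩ := ih
    refine ⟨?_, ?_, ?_⟩
    · intro f n r M h
      obtain ⟨s, rfl⟩ : ∃ s, r = s + 2 := ⟨r - 2, by have := h.two; omega⟩
      rw [coeff_step _ _ (u_eq hC hH s _)]
      have hdisj : Disjoint (Finset.range (s+2)) M := by
        rw [Finset.disjoint_left]
        intro a ha hM
        have := h.big a hM
        rw [Finset.mem_range] at ha; omega
      rw [N_succ (Finset.range (s+2) ∪ M) (by intro i; rw [h.act]; simp),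
        Finset.sum_union hdisj, Finset.range_eq_Ico, Finset.sum_eq_sum_Ico_succ_bot (by omega),
        Finset.sum_eq_sum_Ico_succ_bot (by omega)]
      have e0 := ihU _ _ _ _ h.c0
      have e1 := ihZ _ _ _ _ _ h.c1
      rw [Finset.card_image_of_injective _ (add_left_injective 1)] at e0
      push_cast
      simp only [map_add, map_sum, coeff_natmul]
      rw [e0, e1, Finset.sum_congr rfl (fun j hj => ihU _ _ _ _ (h.cM hj)),
        Finset.sum_congr rfl (fun j hj => ihU _ _ _ _ (h.cj (Finset.mem_Ico.1 hj).1
          (Finset.mem_Ico.1 hj).2))]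
      simp only [Finset.card_singleton, Finset.sum_const, nsmul_eq_mul, Finset.card_empty]
      ring
    · intro f n j h
      rw [coeff_step _ _ (b_eq hC hH)]
      have h2 := h.two
      rw [N_succ {0, j} (by intro i; rw [h.act]; simp), Finset.sum_pair (by omega)]
      push_cast
      rw [ihU _ _ _ _ h.c0, ihB _ _ _ h.cj, Finset.card_singleton, map_add]
    · intro f n p q M h
      rw [coeff_step _ _ (z_eq hC hH _)]
      have hp := h.pos
      have hpq := h.lt
      have hqM : q ∉ M := fun hm => by have := h.big q hm; omega
      have hpM : p ∉ M := fun hm => by have := h.big p hm; omega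
      have h0M : 0 ∉ M := fun hm => by have := h.big 0 hm; omega
      rw [N_succ (insert 0 (insert p (insert q M))) (by intro i; rw [h.act]; simp),
        Finset.sum_insert (by simp [h0M]; omega), Finset.sum_insert (by simp [hpM]; omega),
        Finset.sum_insert hqM]
      have e0 := ihU _ _ _ _ h.c0
      have e1 := ihZ _ _ _ _ _ h.cp
      have e2 := ihZ _ _ _ _ _ h.cq
      rw [Finset.card_image_of_injective _ (add_left_injective 1),
        Finset.card_insert_of_notMem (by simp [hpM]; omega), Finset.card_insert_of_notMem hqM] at e0
      rw [Finset.card_image_of_injective _ (add_left_injective 1),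
        Finset.card_insert_of_notMem hqM] at e1
      push_cast
      simp only [map_add, coeff_natmul]
      rw [e0, e1, e2, Finset.sum_congr rfl (fun j hj => ihB _ _ _ (h.cM hj))]
      simp only [Finset.sum_const, nsmul_eq_mul, Finset.card_empty]
      ring

lemma st_one {f : ℕ → ℕ} (hb : Bd f 1) (i : ℕ) : Act f 1 i ↔ i = 0 ∨ i = 1 := by
  constructor
  · intro h; have := h.1; omega
  · intro h
    refine ⟨by omega, ?_, ?_⟩
    · intro a b c; omega
    · intro a b c; omega

lemma inj_one (f : ℕ → ℕ) : Inj f 1 := by intro a b; omega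

include hC hH in
lemma count_one {f : ℕ → ℕ} (hb : Bd f 1) (k : ℕ) :
    (N k 1 f : ℚ) = coeff k ((3*X^2 - 3*X + 1) * H) := by
  cases k with
  | zero => rw [coeff_step0 _ _ (a_eq hC hH)]; simp [N]
  | succ k =>
    rw [coeff_step _ _ (a_eq hC hH), N_succ {0, 1} (by intro i; rw [st_one hb]; simp),
      Finset.sum_pair (by omega)]
    obtain ⟨ihU, -, ihZ⟩ := main_count hC hH k
    have hA := st_one hb
    have sU : StU (ins f 0 1) 2 2 {2} := by
      refine ⟨hb.ins (by omega), (inj_one f).ins hb (by omega), le_rfl, ?_, by simp, ?_, by simp⟩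
      · intro i
        rw [act_ins0 hb ((hA 0).2 (by simp))]
        simp only [hA, Finset.mem_singleton]
        constructor
        · rintro (rfl | ⟨k, rfl, rfl | rfl⟩) <;> omega
        · intro h1
          rcases Nat.eq_zero_or_pos i with h0 | h0
          · exact Or.inl h0
          · exact Or.inr ⟨i - 1, by omega, by omega⟩
      · intro k hk i hi
        rw [Finset.mem_singleton] at hk
        rcases Nat.eq_zero_or_pos i with rfl | hi0
        · exact R_triv0 _ _
        obtain rfl : i = 1 := by omega
        rcases hk with hk | rfl
        · exact R_ge (by omega)
        · exact R_one hb le_rfl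
    have sZ : StZ (ins f 1 1) 2 1 2 ∅ := by
      refine stZ_new hb (inj_one f) one_pos le_rfl (D_1 _) ?_
      intro i
      rw [act_ins hb le_rfl]
      constructor
      · rintro (h1 | ⟨k, rfl, h1, h3, h4, h5⟩)
        · omega
        · have := h3.1; omega
      · rintro (rfl | rfl | rfl)
        · exact Or.inl ⟨by omega, (hA 0).2 (by simp), R_triv0 _ _⟩
        · exact Or.inl ⟨by omega, (hA 1).2 (by simp), R_self _ _⟩
        · exact Or.inr ⟨1, rfl, le_rfl, (hA 1).2 (by simp), G_self _ _, D_1 _⟩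
    push_cast
    rw [ihU _ _ _ _ sU, ihZ _ _ _ _ _ sZ, Finset.card_singleton, Finset.card_empty, map_add]

include hC hH in
lemma count_zero (f : ℕ → ℕ) (k : ℕ) :
    (N k 0 f : ℚ) = coeff k (1 + X * ((3*X^2 - 3*X + 1) * H)) := by
  have hb : Bd f 0 := by intro i; omega
  cases k with
  | zero => rw [coeff_step0 _ _ rfl]; simp [N]
  | succ k =>
    rw [coeff_step _ _ rfl, N_succ {0} (by
      intro i
      rw [Finset.mem_singleton]
      constructor
      · intro h; have := h.1; omega
      · rintro rfl
        refine ⟨by omega, ?_, ?_⟩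
        · intro a b c; omega
        · intro a b c; omega), Finset.sum_singleton]
    exact count_one hC hH (hb.ins le_rfl) k
end GF

section Count
variable {n : ℕ}

def F (π : Equiv.Perm (Fin n)) (i : ℕ) : ℕ := if h : i < n then (π ⟨i, h⟩ : ℕ) else 0

lemma F_val (π : Equiv.Perm (Fin n)) (i : Fin n) : F π i = π i := by
  simp [F]

lemma F_bd (π : Equiv.Perm (Fin n)) : Bd (F π) n := by
  intro i hi
  simp [F, hi]

def Phi (x : Fin (n+1) × Equiv.Perm (Fin n)) : Equiv.Perm (Fin (n+1)) :=
  (finSuccEquiv' x.1).trans ((Equiv.optionCongr x.2).trans (finSuccEquiv' (Fin.last n)).symm)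

lemma Phi_self (j : Fin (n+1)) (π : Equiv.Perm (Fin n)) : Phi (j, π) j = Fin.last n := by
  simp [Phi]

lemma Phi_succAbove (j : Fin (n+1)) (π : Equiv.Perm (Fin n)) (i : Fin n) :
    Phi (j, π) (j.succAbove i) = (π i).castSucc := by
  simp [Phi]

lemma Phi_inj : Function.Injective (Phi (n := n)) := by
  rintro ⟨j, π⟩ ⟨j', π'⟩ h
  have h1 : j = j' := by
    have a := Phi_self j π
    have b := Phi_self j' π'
    rw [h, ← b] at a
    exact (Phi (j', π')).injective a
  subst h1
  congr 1
  ext i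
  have a := Phi_succAbove j π i
  rw [h, Phi_succAbove] at a
  simpa [Fin.ext_iff] using a.symm

lemma Phi_bij : Function.Bijective (Phi (n := n)) := by
  rw [Fintype.bijective_iff_injective_and_card]
  refine ⟨Phi_inj, ?_⟩
  simp [Fintype.card_perm, Nat.factorial_succ]

lemma F_Phi (j : Fin (n+1)) (π : Equiv.Perm (Fin n)) : F (Phi (j, π)) = ins (F π) j n := by
  funext i
  by_cases hi : i < n + 1
  · have e := F_val (Phi (j, π)) ⟨i, hi⟩
    simp only at e
    rw [e]
    rcases eq_or_ne (⟨i, hi⟩ : Fin (n+1)) j with h | h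
    · have h' : i = (j : ℕ) := by rw [← h]
      rw [h, Phi_self, h', ins_self]; simp
    · obtain ⟨k, hk⟩ := Fin.exists_succAbove_eq h
      rw [← hk, Phi_succAbove]
      have : i = sk j k := by
        have := congrArg Fin.val hk
        simp only at this
        rw [← this]
        unfold sk
        by_cases hkj : (k : ℕ) < j
        · rw [Fin.succAbove_of_castSucc_lt _ _ (by rw [Fin.lt_def]; simpa using hkj)]; simp [hkj]
        · rw [Fin.succAbove_of_le_castSucc _ _ (by rw [Fin.le_def]; simpa using hkj)]; simp [hkj]
      rw [this, ins_sk, F_val]; simp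
  · have := j.2
    simp [F, ins, hi, show ¬ i < (j:ℕ) by omega, show ¬ i = (j:ℕ) by omega, show ¬ i - 1 < n by omega]

open Classical in
lemma step (g : (ℕ → ℕ) → ℕ) :
    ∑ π : Equiv.Perm (Fin (n+1)) with Av (F π) (n+1), g (F π) =
    ∑ π : Equiv.Perm (Fin n) with Av (F π) n,
      ∑ j ∈ (Finset.range (n+1)).filter (fun j => Act (F π) n j), g (ins (F π) j n) := by
  rw [Finset.sum_filter, ← (Equiv.ofBijective _ (Phi_bij (n := n))).sum_comp,
    Fintype.sum_prod_type_right, Finset.sum_filter]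
  apply Finset.sum_congr rfl
  intro π _
  rw [Finset.sum_filter, Finset.sum_range]
  split_ifs with h
  · apply Finset.sum_congr rfl
    intro j _
    simp only [Equiv.ofBijective_apply, F_Phi, av_ins (F_bd π) (Nat.lt_succ_iff.1 j.2), h, true_and]
  · apply Finset.sum_eq_zero
    intro j _
    simp only [Equiv.ofBijective_apply, F_Phi, av_ins (F_bd π) (Nat.lt_succ_iff.1 j.2), h, false_and,
      if_false]

open Classical in
lemma total (k : ℕ) : ∀ n, ∑ π : Equiv.Perm (Fin n) with Av (F π) n, N k n (F π) =
    (Finset.univ.filter (fun π : Equiv.Perm (Fin (n+k)) => Av (F π) (n+k))).card := by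
  induction k with
  | zero => intro n; simp [N]
  | succ k ih =>
    intro n
    have := step (n := n) (fun f => N k (n+1) f)
    rw [ih (n+1)] at this
    simp only [N]
    rw [← this]
    rw [show n + 1 + k = n + (k + 1) by ring]

open Classical in
lemma total0 (k : ℕ) : ∃ f, N k 0 f =
    (Finset.univ.filter (fun π : Equiv.Perm (Fin k) => Av (F π) k)).card := by
  have h := total k 0
  rw [zero_add] at h
  refine ⟨F (1 : Equiv.Perm (Fin 0)), ?_⟩
  rw [← h]
  have : (Finset.univ.filter (fun π : Equiv.Perm (Fin 0) => Av (F π) 0)) = {1} := by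
    ext π
    simp only [Finset.mem_filter, Finset.mem_univ, true_and, Finset.mem_singleton]
    exact ⟨fun _ => Subsingleton.elim _ _, fun _ a b c d _ _ _ h => absurd h (by omega)⟩
  rw [this, Finset.sum_singleton]

def rc : Equiv.Perm (Fin n) ≃ Equiv.Perm (Fin n) :=
  (Equiv.mulLeft Fin.revPerm).trans (Equiv.mulRight Fin.revPerm)

lemma rc_apply (π : Equiv.Perm (Fin n)) (i : Fin n) : rc π i = (π i.rev).rev := by
  simp [rc]

lemma contains4 (π : Equiv.Perm (Fin n)) (σ : Fin 4 → Fin 4) :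
    ContainsPattern π σ ↔ ∃ a b c d : Fin n, a < b ∧ b < c ∧ c < d ∧
      ∀ i j : Fin 4, σ i < σ j ↔ π (![a,b,c,d] i) < π (![a,b,c,d] j) := by
  constructor
  · rintro ⟨f, hf⟩
    refine ⟨f 0, f 1, f 2, f 3, by simp, by simp, by simp, ?_⟩
    have : ![f 0, f 1, f 2, f 3] = f := by
      ext i; fin_cases i <;> rfl
    rw [this]; exact hf
  · rintro ⟨a, b, c, d, h1, h2, h3, h⟩
    refine ⟨OrderEmbedding.ofStrictMono ![a,b,c,d] ?_, h⟩
    rw [Fin.strictMono_iff_lt_succ]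
    intro i
    fin_cases i
    · exact h1
    · exact h2
    · exact h3

lemma c1 (π : Equiv.Perm (Fin n)) : ContainsPattern π ![0,1,3,2] ↔ ∃ a b c d : Fin n,
    a < b ∧ b < c ∧ c < d ∧ π a < π b ∧ π b < π d ∧ π d < π c := by
  rw [contains4]
  refine exists_congr fun a => exists_congr fun b => exists_congr fun c => exists_congr fun d =>
    and_congr_right fun _ => and_congr_right fun _ => and_congr_right fun _ => ?_
  simp only [Fin.forall_fin_succ, Fin.lt_def]
  simp
  omega

lemma c2 (π : Equiv.Perm (Fin n)) : ContainsPattern π ![0,3,1,2] ↔ ∃ a b c d : Fin n,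
    a < b ∧ b < c ∧ c < d ∧ π a < π c ∧ π c < π d ∧ π d < π b := by
  rw [contains4]
  refine exists_congr fun a => exists_congr fun b => exists_congr fun c => exists_congr fun d =>
    and_congr_right fun _ => and_congr_right fun _ => and_congr_right fun _ => ?_
  simp only [Fin.forall_fin_succ, Fin.lt_def]
  simp
  omega

lemma c3 (π : Equiv.Perm (Fin n)) : ContainsPattern π ![1,2,0,3] ↔ ∃ a b c d : Fin n,
    a < b ∧ b < c ∧ c < d ∧ π c < π a ∧ π a < π b ∧ π b < π d := by
  rw [contains4]
  refine exists_congr fun a => exists_congr fun b => exists_congr fun c => exists_congr fun d =>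
    and_congr_right fun _ => and_congr_right fun _ => and_congr_right fun _ => ?_
  simp only [Fin.forall_fin_succ, Fin.lt_def]
  simp
  omega

lemma avoid_iff (π : Equiv.Perm (Fin n)) :
    (∀ σ ∈ ({![0,1,3,2], ![0,3,1,2], ![1,2,0,3]} : Set (Fin 4 → Fin 4)), ¬ ContainsPattern π σ) ↔
      Av (F (rc π)) n := by
  simp only [Set.mem_insert_iff, Set.mem_singleton_iff, forall_eq_or_imp, forall_eq, c1, c2, c3]
  have key : ∀ i : Fin n, F (rc π) i.rev = n - (π i + 1) := by
    intro i
    rw [F_val, rc_apply, Fin.rev_rev, Fin.val_rev]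
  have key2 : ∀ i (h : i < n), F (rc π) i = n - (π (Fin.rev ⟨i, h⟩) + 1) := by
    intro i h
    rw [← key, Fin.rev_rev]
  constructor
  · rintro ⟨h1, h2, h3⟩ a b c d hab hbc hcd hd
    push Not at h1 h2 h3
    have l1 : Fin.rev (⟨c, by omega⟩ : Fin n) < Fin.rev (⟨b, by omega⟩ : Fin n) := by rw [Fin.rev_lt_rev]; exact hbc
    have l2 : Fin.rev (⟨b, by omega⟩ : Fin n) < Fin.rev (⟨a, by omega⟩ : Fin n) := by rw [Fin.rev_lt_rev]; exact hab
    have l3 : Fin.rev (⟨d, hd⟩ : Fin n) < Fin.rev (⟨c, by omega⟩ : Fin n) := by rw [Fin.rev_lt_rev]; exact hcd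
    have h1 := h1 _ _ _ _ l3 l1 l2
    have h2 := h2 _ _ _ _ l3 l1 l2
    have h3 := h3 _ _ _ _ l3 l1 l2
    rw [key2 a (by omega), key2 b (by omega), key2 c (by omega), key2 d hd]
    simp only [Fin.lt_def, Fin.le_def] at h1 h2 h3
    omega
  · intro h
    have gen : ∀ a b c d : Fin n, a < b → b < c → c < d → _ := fun a b c d h1 h2 h3 =>
      h d.rev c.rev b.rev a.rev (Fin.lt_def.1 (Fin.rev_lt_rev.2 h3))
        (Fin.lt_def.1 (Fin.rev_lt_rev.2 h2)) (Fin.lt_def.1 (Fin.rev_lt_rev.2 h1)) a.rev.2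
    simp only [key] at gen
    refine ⟨?_, ?_, ?_⟩ <;>
    · rintro ⟨a, b, c, d, h1, h2, h3, h4, h5, h6⟩
      have := gen a b c d h1 h2 h3
      rw [Fin.lt_def] at h4 h5 h6
      have := (π a).2
      have := (π b).2
      have := (π c).2
      have := (π d).2
      omega

open Classical in
lemma avoiderCount_eq (n : ℕ) :
    avoiderCount ({![0,1,3,2], ![0,3,1,2], ![1,2,0,3]} : Set (Fin 4 → Fin 4)) n =
    (Finset.univ.filter (fun π : Equiv.Perm (Fin n) => Av (F π) n)).card := by
  unfold avoiderCount
  rw [Nat.card_congr (Equiv.subtypeEquiv (rc (n := n)) (q := fun π => Av (F π) n) avoid_iff),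
    Nat.card_eq_fintype_card, Fintype.card_subtype]

end Count

lemma catalan_eq : (X : PowerSeries ℚ) * catalanGF^2 = catalanGF - 1 := by
  rw [eq_sub_iff_add_eq]
  ext n
  cases n with
  | zero => simp [catalanGF]
  | succ n =>
    rw [map_add, coeff_succ_X_mul, pow_two, coeff_mul]
    simp [catalanGF, coeff_one, catalan_succ']

lemma exists_H : ∃ H : PowerSeries ℚ,
    ((1 - X) * (3*X^2 - 3*X + 1) - X * (2*X^2 - 2*X + 1) * catalanGF) * H = 1 := by
  refine ⟨_, PowerSeries.mul_inv_cancel _ ?_⟩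
  simp

lemma gf_eq {H : PowerSeries ℚ}
    (hH : ((1 - X) * (3*X^2 - 3*X + 1) - X * (2*X^2 - 2*X + 1) * catalanGF) * H = 1) :
    avoiderGF ({![0,1,3,2], ![0,3,1,2], ![1,2,0,3]} : Set (Fin 4 → Fin 4)) =
      1 + X * ((3*X^2 - 3*X + 1) * H) := by
  ext n
  obtain ⟨f, hf⟩ := total0 n
  rw [← count_zero catalan_eq hH f n, hf, avoiderGF, coeff_mk, avoiderCount_eq]

end TriAv

theorem statement_17 :
    ((X : PowerSeries ℚ) * (2*X^2 - 2*X + 1) * catalanGF - (1 - X) * (3*X^2 - 3*X + 1)) * avoiderGF ({![0,1,3,2], ![0,3,1,2], ![1,2,0,3]} : Set (Fin 4 → Fin 4)) =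
      X * (2*X^2 - 2*X + 1) * catalanGF - (3*X^2 - 3*X + 1) := by
  obtain ⟨H, hH⟩ := TriAv.exists_H
  rw [TriAv.gf_eq hH]
  linear_combination (-X * (3*X^2 - 3*X + 1)) * hH
end
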